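/- arXiv:1506.01814 — 3 statements merged into one kernel-verified Lean document; each statement's English description precedes it below -/
import Mathlib

section
/- Let ℓ be an odd prime, K a number field containing a primitive ℓ-th root of unity ζ, S a finite set of finite places of K such that ℓ is invertible in O = O_{K,S}. Then the number of conjugacy classes in SL₂(O) of elements g of order exactly ℓ with tr(g) = ζ + ζ⁻¹ equals the class number card(Cl(O)) of the ring O. -/
open IsDedekindDomain NumberField

open Matrix
open scoped nonZeroDivisors MatrixGroups

/-!
If `g ∈ SL₂(O)` has trace `ζ + ζ⁻¹` and `ζ - ζ⁻¹` is a unit, then `g = ζ⁻¹ (1 - E) + ζ E` for an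
idempotent `E` of trace `1`, and conjugating `g` amounts to conjugating `E`. Over the fraction
field `E = u wᵀ` with `wᵀ u = 1`. The fractional ideal `(w₁, w₂)` is invertible, with inverse
`(u₁, u₂)`, and its class does not depend on the choice of `u` and `w`; it turns out to be a
complete conjugacy invariant of `E`. Every class occurs because every ideal of `O` is generated by
two elements. The order of `g` is automatically that of `ζ`.
-/

section FractionalIdeals

variable {R K ι κ : Type*} [CommRing R] [Field K] [Algebra R K]

theorem exists_map_eq_vecMulVec {u : ι → K} {w : κ → K} {I J : FractionalIdeal R⁰ K}
    (hu : ∀ i, u i ∈ I) (hw : ∀ j, w j ∈ J) (hIJ : I * J ≤ 1) :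
    ∃ M : Matrix ι κ R, M.map (algebraMap R K) = vecMulVec u w := by
  have integral (i : ι) (j : κ) : ∃ r, algebraMap R K r = u i * w j :=
    (FractionalIdeal.mem_one_iff R⁰).1 (hIJ (FractionalIdeal.mul_mem_mul (hu i) (hw j)))
  choose M hM using integral
  exact ⟨of M, Matrix.ext hM⟩

variable [Fintype ι] [Fintype κ]

theorem dotProduct_mem_mul {u w : ι → K} {I J : FractionalIdeal R⁰ K} (hu : ∀ i, u i ∈ I)
    (hw : ∀ i, w i ∈ J) : u ⬝ᵥ w ∈ I * J :=
  Submodule.sum_mem (I * J : FractionalIdeal R⁰ K).coeToSubmodule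
    fun i _ => FractionalIdeal.mul_mem_mul (hu i) (hw i)

variable [IsFractionRing R K]

variable (R) in
/-- The fractional ideal generated by the coordinates of a vector. Row vectors over `K` give ideal
classes of `R` in this way. -/
noncomputable def coordIdeal (w : ι → K) : FractionalIdeal R⁰ K :=
  FractionalIdeal.spanFinset R Finset.univ w

theorem coe_coordIdeal (w : ι → K) :
    (coordIdeal R w : Submodule R K) = Submodule.span R (Set.range w) := by
  simp [coordIdeal]

theorem coordIdeal_le_iff {w : ι → K} {I : FractionalIdeal R⁰ K} :
    coordIdeal R w ≤ I ↔ ∀ i, w i ∈ I := by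
  rw [← FractionalIdeal.coe_le_coe, coe_coordIdeal, Submodule.span_le, Set.range_subset_iff]
  rfl

theorem apply_mem_coordIdeal (w : ι → K) (i : ι) : w i ∈ coordIdeal R w :=
  coordIdeal_le_iff.1 le_rfl i

theorem coordIdeal_mul_le_iff {w : ι → K} {u : κ → K} {I : FractionalIdeal R⁰ K} :
    coordIdeal R w * coordIdeal R u ≤ I ↔ ∀ i j, w i * u j ∈ I := by
  rw [← FractionalIdeal.coe_le_coe, FractionalIdeal.coe_mul, coe_coordIdeal, coe_coordIdeal,
    Submodule.span_mul_span, Submodule.span_le, Set.mul_subset_iff]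
  simp only [Set.forall_mem_range]
  rfl

theorem coordIdeal_smul (x : K) (w : ι → K) :
    coordIdeal R (x • w) = FractionalIdeal.spanSingleton R⁰ x * coordIdeal R w := by
  rw [← FractionalIdeal.coeToSubmodule_inj, FractionalIdeal.coe_mul,
    FractionalIdeal.coe_spanSingleton, coe_coordIdeal, coe_coordIdeal,
    Submodule.span_mul_span, Set.singleton_mul, ← Set.range_comp]
  rfl

theorem coordIdeal_vecMul_le (w : ι → K) (M : Matrix ι κ R) :
    coordIdeal R (w ᵥ* M.map (algebraMap R K)) ≤ coordIdeal R w := by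
  refine coordIdeal_le_iff.2 fun j => ?_
  rw [← mul_one (coordIdeal R w)]
  exact dotProduct_mem_mul (apply_mem_coordIdeal w) fun i => FractionalIdeal.coe_mem_one _ _

theorem coordIdeal_vecMul_of_mul_eq_one [DecidableEq ι] (w : ι → K) {M : Matrix ι κ R}
    {N : Matrix κ ι R} (hMN : M * N = 1) :
    coordIdeal R (w ᵥ* M.map (algebraMap R K)) = coordIdeal R w := by
  refine (coordIdeal_vecMul_le w M).antisymm ?_
  calc coordIdeal R w
      = coordIdeal R (w ᵥ* M.map (algebraMap R K) ᵥ* N.map (algebraMap R K)) := by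
        rw [vecMul_vecMul, ← Matrix.map_mul, hMN]; simp
    _ ≤ coordIdeal R (w ᵥ* M.map (algebraMap R K)) := coordIdeal_vecMul_le _ N

theorem exists_dotProduct_eq_of_mem_coordIdeal_mul {w : ι → K} {J : FractionalIdeal R⁰ K} {x : K}
    (hx : x ∈ coordIdeal R w * J) : ∃ u : ι → K, (∀ i, u i ∈ J) ∧ w ⬝ᵥ u = x := by
  refine FractionalIdeal.mul_induction_on hx (fun a ha b hb => ?_) fun a b => ?_
  · rw [← FractionalIdeal.mem_coe, coe_coordIdeal, Submodule.mem_span_range_iff_exists_fun] at ha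
    obtain ⟨c, rfl⟩ := ha
    refine ⟨fun i => c i • b, fun i => Submodule.smul_mem _ _ hb, ?_⟩
    simp only [dotProduct, Finset.sum_mul, smul_mul_assoc, mul_smul_comm]
  · rintro ⟨u, hu, rfl⟩ ⟨v, hv, rfl⟩
    exact ⟨u + v, fun i => Submodule.add_mem _ (hu i) (hv i), dotProduct_add w u v⟩

variable [IsDomain R]

theorem exists_eq_coordIdeal_fin_two (hR : ∀ I : Ideal R, ∃ a b, I = Ideal.span {a, b})
    (I : FractionalIdeal R⁰ K) : ∃ w : Fin 2 → K, I = coordIdeal R w := by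
  obtain ⟨r, I₀, -, rfl⟩ := FractionalIdeal.exists_eq_spanSingleton_mul I
  obtain ⟨a, b, rfl⟩ := hR I₀
  refine ⟨(algebraMap R K r)⁻¹ • ![algebraMap R K a, algebraMap R K b], ?_⟩
  rw [coordIdeal_smul]
  congr 1
  rw [← FractionalIdeal.coeToSubmodule_inj]
  simp [coe_coordIdeal, IsLocalization.coeSubmodule_span, Set.image_pair, Set.pair_comm]

theorem classGroup_mk_eq_mk_iff {I J : (FractionalIdeal R⁰ K)ˣ} :
    ClassGroup.mk K I = ClassGroup.mk K J ↔
      ∃ x : Kˣ, (J : FractionalIdeal R⁰ K) = FractionalIdeal.spanSingleton R⁰ (x : K) * I := by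
  rw [← (ClassGroup.equiv K).injective.eq_iff, ClassGroup.equiv_mk, ClassGroup.equiv_mk,
    FractionalIdeal.canonicalEquiv_self, QuotientGroup.mk'_eq_mk']
  change (∃ z ∈ (toPrincipalIdeal R K).range, I * z = J) ↔ _
  constructor
  · rintro ⟨_, ⟨x, rfl⟩, rfl⟩
    exact ⟨x, by rw [Units.val_mul, coe_toPrincipalIdeal, mul_comm]⟩
  · rintro ⟨x, hx⟩
    refine ⟨toPrincipalIdeal R K x, ⟨x, rfl⟩, Units.ext ?_⟩
    rw [Units.val_mul, coe_toPrincipalIdeal, hx, mul_comm]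

end FractionalIdeals

section FinTwo

variable {R : Type*} [CommRing R]

theorem adjugate_vecMulVec_fin_two (u w : Fin 2 → R) :
    adjugate (vecMulVec u w) = vecMulVec ![w 1, -w 0] ![u 1, -u 0] := by
  rw [adjugate_fin_two]
  ext i j
  fin_cases i <;> fin_cases j <;> simp [vecMulVec_apply, mul_comm]

theorem adjugate_vecMulVec_mulVec_fin_two (u w : Fin 2 → R) :
    adjugate (vecMulVec u w) *ᵥ u = 0 := by
  have hu : ![u 1, -u 0] ⬝ᵥ u = 0 := by simp [vecHead, vecTail, mul_comm (u 1)]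
  rw [adjugate_vecMulVec_fin_two, vecMulVec_mulVec, hu, MulOpposite.op_zero, zero_smul]

theorem vecMul_adjugate_vecMulVec_fin_two (u w : Fin 2 → R) :
    w ᵥ* adjugate (vecMulVec u w) = 0 := by
  have hw : w ⬝ᵥ ![w 1, -w 0] = 0 := by simp [vecHead, vecTail, mul_comm (w 1)]
  rw [adjugate_vecMulVec_fin_two, vecMul_vecMulVec, hw, zero_smul]

theorem det_vecMulVec_add_adjugate_fin_two (u w u' w' : Fin 2 → R) :
    (vecMulVec u' w + adjugate (vecMulVec u w')).det = (w ⬝ᵥ u) * (w' ⬝ᵥ u') := by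
  simp only [adjugate_fin_two, det_fin_two, vecMulVec_apply, dotProduct, Fin.sum_univ_two,
    Matrix.add_apply, of_apply, cons_val', cons_val_zero, cons_val_one, cons_val_fin_one]
  ring

theorem isIdempotentElem_of_trace_eq_one_of_det_eq_zero {E : Matrix (Fin 2) (Fin 2) R}
    (htr : E.trace = 1) (hdet : E.det = 0) : IsIdempotentElem E := by
  nontriviality R
  have cayley_hamilton := aeval_self_charpoly E
  rw [charpoly_fin_two, htr, hdet] at cayley_hamilton
  simpa [sub_eq_zero, IsIdempotentElem, sq] using cayley_hamilton

theorem det_smul_one_add_smul_fin_two (a c : R) (M : Matrix (Fin 2) (Fin 2) R) :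
    (a • 1 + c • M).det = a ^ 2 + a * c * M.trace + c ^ 2 * M.det := by
  simp only [det_fin_two, trace_fin_two, Matrix.add_apply, Matrix.smul_apply, one_fin_two,
    of_apply, cons_val', cons_val_zero, cons_val_one, cons_val_fin_one, smul_eq_mul]
  ring

theorem exists_eq_vecMulVec_of_det_eq_zero {F : Type*} [Field F] {E : Matrix (Fin 2) (Fin 2) F}
    (hdet : E.det = 0) : ∃ u w : Fin 2 → F, E = vecMulVec u w := by
  obtain rfl | hE := eq_or_ne E 0
  · exact ⟨0, 0, (vecMulVec_zero 0).symm⟩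
  obtain ⟨i, j, hij⟩ : ∃ i j, E i j ≠ 0 := by
    contrapose! hE
    exact Matrix.ext hE
  have minor : ∀ k l, E k j * E i l = E i j * E k l := by
    rw [det_fin_two] at hdet
    revert i j
    simp only [Fin.forall_fin_two]
    grind
  refine ⟨fun k => E k j / E i j, E i, ?_⟩
  ext k l
  rw [vecMulVec_apply, div_mul_eq_mul_div, minor, mul_div_cancel_left₀ _ hij]

end FinTwo

/-- `E = u wᵀ` over `K` with `wᵀ u = 1`: the matrix `E` is a projection onto the line spanned by
`u`, along the hyperplane `w ⬝ᵥ x = 0`. -/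
structure IsRankOneFactorization {R K ι : Type*} [CommRing R] [Field K] [Algebra R K] [Fintype ι]
    (E : Matrix ι ι R) (u w : ι → K) : Prop where
  map_eq : E.map (algebraMap R K) = vecMulVec u w
  dotProduct_eq_one : w ⬝ᵥ u = 1

namespace IsRankOneFactorization

section Basic

variable {R K ι : Type*} [CommRing R] [Field K] [Algebra R K] [Fintype ι]
variable {E E' : Matrix ι ι R} {u w u' w' : ι → K}

theorem algebraMap_apply (h : IsRankOneFactorization E u w) (i j : ι) :
    algebraMap R K (E i j) = u i * w j :=
  congrFun₂ h.map_eq i j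

theorem smul (h : IsRankOneFactorization E u w) (x : Kˣ) :
    IsRankOneFactorization E (x⁻¹ • u) (x • w) where
  map_eq := by
    rw [h.map_eq, smul_vecMulVec, vecMulVec_smul, smul_smul, inv_mul_cancel, one_smul]
  dotProduct_eq_one := by
    rw [smul_dotProduct, dotProduct_smul, smul_smul, mul_inv_cancel, one_smul,
      h.dotProduct_eq_one]

theorem vecMul_eq_smul_of_mul_eq_mul (h : IsRankOneFactorization E u w)
    (h' : IsRankOneFactorization E' u' w') {M : Matrix ι ι R} (hM : M * E = E' * M) :
    w' ᵥ* M.map (algebraMap R K) = (w' ⬝ᵥ M.map (algebraMap R K) *ᵥ u) • w :=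
  calc w' ᵥ* M.map (algebraMap R K)
      = w' ᵥ* (E' * M).map (algebraMap R K) := by
        rw [Matrix.map_mul, h'.map_eq, ← vecMul_vecMul, vecMul_vecMulVec, h'.dotProduct_eq_one,
          one_smul]
    _ = (w' ⬝ᵥ M.map (algebraMap R K) *ᵥ u) • w := by
        rw [← hM, Matrix.map_mul, h.map_eq, mul_vecMulVec, vecMul_vecMulVec]

variable [IsFractionRing R K]

theorem trace_eq_one (h : IsRankOneFactorization E u w) : E.trace = 1 := by
  apply IsFractionRing.injective R K
  rw [AddMonoidHom.map_trace, map_one, ← h.dotProduct_eq_one, dotProduct_comm, ← trace_vecMulVec,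
    ← h.map_eq]

theorem exists_of_coordIdeal_mul_eq_one {I : FractionalIdeal R⁰ K} (hI : coordIdeal R w * I = 1) :
    ∃ (E : Matrix ι ι R) (u : ι → K), IsRankOneFactorization E u w := by
  obtain ⟨u, hu, huw⟩ : ∃ u : ι → K, (∀ i, u i ∈ I) ∧ w ⬝ᵥ u = 1 :=
    exists_dotProduct_eq_of_mem_coordIdeal_mul (hI ▸ FractionalIdeal.one_mem_one R⁰)
  obtain ⟨E, hE⟩ := exists_map_eq_vecMulVec hu (apply_mem_coordIdeal w) (by rw [mul_comm, hI])
  exact ⟨E, u, hE, huw⟩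

theorem coordIdeal_mul_eq_one (h : IsRankOneFactorization E u w) :
    coordIdeal R w * coordIdeal R u = 1 := by
  refine le_antisymm (coordIdeal_mul_le_iff.2 fun i j => ?_) (FractionalIdeal.one_le.2 ?_)
  · rw [mul_comm, ← h.algebraMap_apply]
    exact FractionalIdeal.coe_mem_one _ _
  · rw [← h.dotProduct_eq_one]
    exact dotProduct_mem_mul (apply_mem_coordIdeal w) (apply_mem_coordIdeal u)

/-- The fractional ideal generated by the coordinates of `w`, which is invertible with inverse
generated by the coordinates of `u`. Rescaling `w` multiplies it by a principal ideal, so its class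
depends only on `E`. -/
noncomputable def rowIdeal (h : IsRankOneFactorization E u w) : (FractionalIdeal R⁰ K)ˣ :=
  Units.mkOfMulEqOne _ _ h.coordIdeal_mul_eq_one

@[simp]
theorem val_rowIdeal (h : IsRankOneFactorization E u w) :
    (h.rowIdeal : FractionalIdeal R⁰ K) = coordIdeal R w := rfl

variable [IsDomain R]

theorem mk_rowIdeal_eq_of_mul_eq_mul [DecidableEq ι] (h : IsRankOneFactorization E u w)
    (h' : IsRankOneFactorization E' u' w') {M N : Matrix ι ι R} (hMN : M * N = 1)
    (hM : M * E = E' * M) : ClassGroup.mk K h.rowIdeal = ClassGroup.mk K h'.rowIdeal := by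
  set x := w' ⬝ᵥ M.map (algebraMap R K) *ᵥ u
  have hw' : coordIdeal R w' = FractionalIdeal.spanSingleton R⁰ x * coordIdeal R w := by
    rw [← coordIdeal_smul, ← h.vecMul_eq_smul_of_mul_eq_mul h' hM,
      coordIdeal_vecMul_of_mul_eq_one w' hMN]
  have hx : x ≠ 0 := fun hx => h'.rowIdeal.ne_zero (by simp [hw', hx])
  exact classGroup_mk_eq_mk_iff.2 ⟨Units.mk0 x hx, hw'⟩

end Basic

section FinTwo

variable {R K : Type*} [CommRing R] [Field K] [Algebra R K]
variable {E E' : Matrix (Fin 2) (Fin 2) R} {u w u' w' : Fin 2 → K}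

variable (K) in
theorem exists_of_trace_eq_one_of_det_eq_zero (htr : E.trace = 1) (hdet : E.det = 0) :
    ∃ u w : Fin 2 → K, IsRankOneFactorization E u w := by
  have htrK : (E.map (algebraMap R K)).trace = 1 := by
    rw [← AddMonoidHom.map_trace, htr, map_one]
  have hdetK : (E.map (algebraMap R K)).det = 0 := by
    rw [← RingHom.mapMatrix_apply, ← RingHom.map_det, hdet, map_zero]
  obtain ⟨u, w, huw⟩ := exists_eq_vecMulVec_of_det_eq_zero hdetK
  exact ⟨u, w, huw, by rw [dotProduct_comm, ← trace_vecMulVec, ← huw, htrK]⟩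

variable [IsFractionRing R K]

theorem det_eq_zero (h : IsRankOneFactorization E u w) : E.det = 0 := by
  apply IsFractionRing.injective R K
  simp only [det_fin_two, map_sub, map_mul, map_zero, h.algebraMap_apply]
  ring

theorem exists_mul_eq_mul_of_coordIdeal_eq (h : IsRankOneFactorization E u w)
    (h' : IsRankOneFactorization E' u' w') (hw : coordIdeal R w = coordIdeal R w') :
    ∃ k : SL(2, R), (k : Matrix (Fin 2) (Fin 2) R) * E = E' * k := by
  obtain ⟨A, hA⟩ : ∃ A : Matrix (Fin 2) (Fin 2) R, A.map (algebraMap R K) = vecMulVec u' w :=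
    exists_map_eq_vecMulVec (apply_mem_coordIdeal u') (apply_mem_coordIdeal w)
      (by rw [mul_comm, hw, h'.coordIdeal_mul_eq_one])
  obtain ⟨B, hB⟩ : ∃ B : Matrix (Fin 2) (Fin 2) R, B.map (algebraMap R K) = vecMulVec u w' :=
    exists_map_eq_vecMulVec (apply_mem_coordIdeal u) (apply_mem_coordIdeal w')
      (by rw [mul_comm, ← hw, h.coordIdeal_mul_eq_one])
  -- `u' wᵀ` maps the image of `E` to that of `E'`, the adjugate of `u w'ᵀ` does the same with the
  -- kernels, and the sum of the two has determinant `1`.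
  have hk : (A + adjugate B).map (algebraMap R K) = vecMulVec u' w + adjugate (vecMulVec u w') := by
    rw [Matrix.map_add _ (map_add _), hA, ← hB, ← RingHom.mapMatrix_apply, RingHom.map_adjugate]
    rfl
  have inj := IsFractionRing.injective R K
  refine ⟨⟨A + adjugate B, inj ?_⟩, map_injective inj ?_⟩
  · rw [RingHom.map_det, RingHom.mapMatrix_apply, hk, det_vecMulVec_add_adjugate_fin_two,
      h.dotProduct_eq_one, h'.dotProduct_eq_one, mul_one, map_one]
  · calc ((A + adjugate B) * E).map (algebraMap R K)
        = vecMulVec u' w := by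
          rw [Matrix.map_mul, hk, h.map_eq, mul_vecMulVec, add_mulVec, vecMulVec_mulVec,
            adjugate_vecMulVec_mulVec_fin_two, h.dotProduct_eq_one, MulOpposite.op_one, one_smul,
            add_zero]
      _ = (E' * (A + adjugate B)).map (algebraMap R K) := by
          rw [Matrix.map_mul, hk, h'.map_eq, vecMulVec_mul, vecMul_add, vecMul_vecMulVec,
            vecMul_adjugate_vecMulVec_fin_two, h'.dotProduct_eq_one, one_smul, add_zero]

variable [IsDomain R]

theorem mk_rowIdeal_eq_iff (h : IsRankOneFactorization E u w)
    (h' : IsRankOneFactorization E' u' w') :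
    ClassGroup.mk K h.rowIdeal = ClassGroup.mk K h'.rowIdeal ↔
      ∃ k : SL(2, R), (k : Matrix (Fin 2) (Fin 2) R) * E = E' * k := by
  constructor
  · rw [classGroup_mk_eq_mk_iff]
    rintro ⟨x, hx⟩
    refine (h.smul x).exists_mul_eq_mul_of_coordIdeal_eq h' ?_
    rw [← h'.val_rowIdeal, hx, val_rowIdeal, ← coordIdeal_smul]
    rfl
  · rintro ⟨k, hk⟩
    exact h.mk_rowIdeal_eq_of_mul_eq_mul h' (by rw [mul_adjugate, k.det_coe, one_smul]) hk

theorem exists_rowIdeal_eq (hR : ∀ I : Ideal R, ∃ a b, I = Ideal.span {a, b})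
    (I : (FractionalIdeal R⁰ K)ˣ) :
    ∃ (E : Matrix (Fin 2) (Fin 2) R) (u w : Fin 2 → K) (h : IsRankOneFactorization E u w),
      h.rowIdeal = I := by
  obtain ⟨w, hw⟩ := exists_eq_coordIdeal_fin_two hR (I : FractionalIdeal R⁰ K)
  obtain ⟨E, u, h⟩ := exists_of_coordIdeal_mul_eq_one (hw ▸ I.mul_inv)
  exact ⟨E, u, w, h, Units.ext hw.symm⟩

end FinTwo

end IsRankOneFactorization

section SpectralSum

variable {R A : Type*} [CommRing R] [Ring A] [Algebra R A]

/-- For an idempotent `e` and scalars `a`, `b`, the element acting as `a` on the kernel of `e` and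
as `b` on its image. -/
def spectralSum (a b : R) (e : A) : A :=
  a • (1 - e) + b • e

theorem spectralSum_eq_smul_one_add (a b : R) (e : A) :
    spectralSum a b e = a • 1 + (b - a) • e := by
  rw [spectralSum, smul_sub, sub_smul]
  abel

theorem spectralSum_self (a : R) (e : A) : spectralSum a a e = a • 1 := by
  rw [spectralSum, ← smul_add, sub_add_cancel]

theorem spectralSum_mul_self (a b : R) {e : A} (he : IsIdempotentElem e) :
    spectralSum a b e * e = b • e := by
  rw [spectralSum, add_mul, smul_mul_assoc, smul_mul_assoc, he.one_sub_mul_self, smul_zero,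
    zero_add, he.eq]

theorem spectralSum_pow (a b : R) {e : A} (he : IsIdempotentElem e) (m : ℕ) :
    spectralSum a b e ^ m = spectralSum (a ^ m) (b ^ m) e := by
  induction m with
  | zero => simp [spectralSum]
  | succ m ih =>
    rw [pow_succ, ih]
    simp only [spectralSum, add_mul, mul_add, smul_mul_smul_comm, he.eq, he.one_sub.eq,
      he.one_sub_mul_self, he.mul_one_sub_self, smul_zero, add_zero, zero_add, pow_succ]

theorem mul_spectralSum_eq_spectralSum_mul_iff {a b : R} (hab : IsUnit (b - a)) {e e' k : A} :
    k * spectralSum a b e = spectralSum a b e' * k ↔ k * e = e' * k := by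
  simp only [spectralSum_eq_smul_one_add, mul_add, add_mul, mul_smul_comm, smul_mul_assoc, mul_one,
    one_mul, add_right_inj, hab.smul_left_cancel]

section FinTwo

variable {a b : R} {M E : Matrix (Fin 2) (Fin 2) R}

theorem trace_spectralSum (htr : E.trace = 1) : (spectralSum a b E).trace = a + b := by
  simp only [spectralSum, trace_add, trace_smul, trace_sub, htr, trace_one, Fintype.card_fin,
    Nat.cast_ofNat, smul_eq_mul]
  ring

theorem det_spectralSum (htr : E.trace = 1) (hdet : E.det = 0) :
    (spectralSum a b E).det = a * b := by
  rw [spectralSum_eq_smul_one_add, det_smul_one_add_smul_fin_two, htr, hdet]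
  ring

theorem exists_eq_spectralSum_fin_two (hab : IsUnit (b - a)) (htr : M.trace = a + b)
    (hdet : M.det = a * b) :
    ∃ E : Matrix (Fin 2) (Fin 2) R, E.trace = 1 ∧ E.det = 0 ∧ M = spectralSum a b E := by
  have htr' : (M - a • 1).trace = b - a := by
    simp only [trace_sub, trace_smul, htr, trace_one, Fintype.card_fin, Nat.cast_ofNat, smul_eq_mul]
    ring
  have hdet' : (M - a • 1).det = 0 := by
    rw [sub_eq_neg_add, ← neg_smul, ← one_smul R M, det_smul_one_add_smul_fin_two, htr, hdet]
    ring
  obtain ⟨d, hd⟩ := hab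
  refine ⟨(↑d⁻¹ : R) • (M - a • 1), ?_, ?_, ?_⟩
  · rw [trace_smul, htr', ← hd, smul_eq_mul, Units.inv_mul]
  · rw [det_smul, hdet', mul_zero]
  · rw [spectralSum_eq_smul_one_add, ← hd, smul_smul, Units.mul_inv, one_smul, add_sub_cancel]

end FinTwo

end SpectralSum

theorem exists_eq_spectralSum_of_trace_eq {R : Type*} [CommRing R] {z : Rˣ}
    (hz : IsUnit ((z : R) - ↑z⁻¹)) {g : SL(2, R)}
    (hg : (g : Matrix (Fin 2) (Fin 2) R).trace = z + ↑z⁻¹) :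
    ∃ E : Matrix (Fin 2) (Fin 2) R, E.trace = 1 ∧ E.det = 0 ∧
      (g : Matrix (Fin 2) (Fin 2) R) = spectralSum (↑z⁻¹ : R) (z : R) E :=
  exists_eq_spectralSum_fin_two hz (hg.trans (add_comm _ _)) (by rw [g.det_coe, Units.inv_mul])

theorem orderOf_eq_of_trace_eq {R : Type*} [CommRing R] {z : Rˣ}
    (hz : IsUnit ((z : R) - ↑z⁻¹)) {g : SL(2, R)}
    (hg : (g : Matrix (Fin 2) (Fin 2) R).trace = z + ↑z⁻¹) : orderOf g = orderOf z := by
  obtain ⟨E, htr, hdet, hE⟩ := exists_eq_spectralSum_of_trace_eq hz hg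
  have idem := isIdempotentElem_of_trace_eq_one_of_det_eq_zero htr hdet
  have hpow (m : ℕ) : ((g ^ m : SL(2, R)) : Matrix (Fin 2) (Fin 2) R) =
      spectralSum (↑(z ^ m)⁻¹ : R) (↑(z ^ m) : R) E := by
    rw [Matrix.SpecialLinearGroup.coe_pow, hE, spectralSum_pow _ _ idem, ← inv_pow,
      Units.val_pow_eq_pow_val, Units.val_pow_eq_pow_val]
  refine orderOf_eq_orderOf_iff.2 fun m => ⟨fun hgm => Units.ext ?_, fun hzm => Subtype.ext ?_⟩
  · have hzE : (↑(z ^ m) : R) • E = E := by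
      rw [← spectralSum_mul_self (↑(z ^ m)⁻¹ : R) _ idem, ← hpow, hgm,
        Matrix.SpecialLinearGroup.coe_one, one_mul]
    simpa only [trace_smul, htr, smul_eq_mul, mul_one, Units.val_one] using congrArg trace hzE
  · rw [hpow, hzm, inv_one, spectralSum_self, Units.val_one, one_smul,
      Matrix.SpecialLinearGroup.coe_one]

theorem nonempty_conjClasses_equiv_of_surjective {G β : Type*} [Monoid G] {p : G → Prop}
    {f : {g // p g} → β} (hf : Function.Surjective f)
    (hconj : ∀ a b, f a = f b ↔ IsConj (a : G) b) :
    Nonempty ({c : ConjClasses G // ∃ g, c = ConjClasses.mk g ∧ p g} ≃ β) := by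
  let q (a : {g // p g}) : {c : ConjClasses G // ∃ g, c = ConjClasses.mk g ∧ p g} :=
    ⟨ConjClasses.mk a, a, rfl, a.2⟩
  have hq : Function.Surjective q := fun ⟨c, g, hc, hg⟩ => ⟨⟨g, hg⟩, Subtype.ext hc.symm⟩
  have hqf a b : q a = q b ↔ f a = f b := by
    rw [hconj, Subtype.mk.injEq, ConjClasses.mk_eq_mk_iff_isConj]
  exact ⟨(Setoid.quotientKerEquivOfSurjective q hq).symm.trans
    ((Quotient.congrRight hqf).trans (Setoid.quotientKerEquivOfSurjective f hf))⟩

theorem isConj_iff_exists_mul_eq_mul {n R : Type*} [Fintype n] [DecidableEq n] [CommRing R]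
    {g g' : Matrix.SpecialLinearGroup n R} :
    IsConj g g' ↔ ∃ k : Matrix.SpecialLinearGroup n R, (k : Matrix n n R) * g = g' * k := by
  simp only [isConj_iff, mul_inv_eq_iff_eq_mul, ← Matrix.SpecialLinearGroup.coe_mul]
  exact exists_congr fun k => Subtype.ext_iff

theorem nonempty_conjClasses_trace_eq_equiv_classGroup {R : Type*} [CommRing R] [IsDomain R]
    (hR : ∀ I : Ideal R, ∃ a b, I = Ideal.span {a, b}) {z : Rˣ} (hz : IsUnit ((z : R) - ↑z⁻¹)) :
    Nonempty ({c : ConjClasses SL(2, R) // ∃ g, c = ConjClasses.mk g ∧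
      (g : Matrix (Fin 2) (Fin 2) R).trace = z + ↑z⁻¹} ≃ ClassGroup R) := by
  let K := FractionRing R
  choose E htr hdet hE using
    fun g : {g : SL(2, R) // (g : Matrix (Fin 2) (Fin 2) R).trace = z + ↑z⁻¹} =>
      exists_eq_spectralSum_of_trace_eq hz g.2
  choose u w h using fun g =>
    IsRankOneFactorization.exists_of_trace_eq_one_of_det_eq_zero K (htr g) (hdet g)
  refine nonempty_conjClasses_equiv_of_surjective (f := fun g => ClassGroup.mk K (h g).rowIdeal)
    (fun c => ?_) fun g g' => ?_
  · refine ClassGroup.induction K (fun I => ?_) c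
    obtain ⟨E₀, u₀, w₀, h₀, rfl⟩ := IsRankOneFactorization.exists_rowIdeal_eq hR I
    let g : SL(2, R) := ⟨spectralSum (↑z⁻¹ : R) (z : R) E₀, by
      rw [det_spectralSum h₀.trace_eq_one h₀.det_eq_zero, Units.inv_mul]⟩
    refine ⟨⟨g, (trace_spectralSum h₀.trace_eq_one).trans (add_comm _ _)⟩, ?_⟩
    refine ((h _).mk_rowIdeal_eq_iff h₀).2 ⟨1, ?_⟩
    rw [← mul_spectralSum_eq_spectralSum_mul_iff hz, ← hE, Matrix.SpecialLinearGroup.coe_one,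
      one_mul, mul_one]
  · rw [(h g).mk_rowIdeal_eq_iff (h g'), isConj_iff_exists_mul_eq_mul]
    simp only [hE, mul_spectralSum_eq_spectralSum_mul_iff hz]

theorem isUnit_sub_inv_of_isPrimitiveRoot {R : Type*} [CommRing R] [IsDomain R] {z : Rˣ} {n : ℕ}
    (hz : IsPrimitiveRoot (z : R) n) (hn : 2 < n) (hunit : IsUnit (n : R)) :
    IsUnit ((z : R) - ↑z⁻¹) := by
  have hz2 : (z : R) ^ 2 ≠ 1 := hz.pow_ne_one_of_pos_of_lt two_ne_zero hn
  have hdvd : (z : R) ^ 2 - 1 ∣ (n : R) :=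
    sub_one_dvd_natCast_of_pow_eq_one (by rw [pow_right_comm, hz.pow_eq_one, one_pow]) hz2
  have hsub : (z : R) - ↑z⁻¹ = ↑z⁻¹ * ((z : R) ^ 2 - 1) := by
    rw [mul_sub, sq, Units.inv_mul_cancel_left, mul_one]
  rw [hsub]
  exact z⁻¹.isUnit.mul (isUnit_of_dvd_unit hdvd hunit)

section Overring

variable {A K : Type*} [CommRing A] [Field K] [Algebra A K] [IsFractionRing A K] {n : ℕ} {ζ : K}

theorem exists_units_coe_eq_of_isPrimitiveRoot [IsIntegrallyClosed A] (hζ : IsPrimitiveRoot ζ n)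
    (hn : 0 < n) (B : Subalgebra A K) : ∃ z : Bˣ, ((z : B) : K) = ζ := by
  have hint : IsIntegral A ζ := .of_pow hn (hζ.pow_eq_one ▸ isIntegral_one)
  obtain ⟨a, rfl⟩ := IsIntegrallyClosed.algebraMap_eq_of_integral hint
  have ha : IsPrimitiveRoot a n := hζ.of_map_of_injective (IsFractionRing.injective A K)
  exact ⟨Units.map (algebraMap A B) (ha.isUnit hn.ne').unit, rfl⟩

variable [IsDedekindDomain A]

variable (A) in
theorem exists_algebraMap_mul_eq_and_add_mul_eq_one (x : K) :
    ∃ a b c d : A, algebraMap A K a * x = algebraMap A K c ∧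
      algebraMap A K b * x = algebraMap A K d ∧ algebraMap A K a + algebraMap A K b * x = 1 := by
  let w : Fin 2 → K := ![1, x]
  have one_mem : (1 : K) ∈ coordIdeal A w := apply_mem_coordIdeal w 0
  have ne_zero : coordIdeal A w ≠ 0 := fun h =>
    one_ne_zero ((FractionalIdeal.mem_zero_iff A⁰).1 (h ▸ one_mem))
  obtain ⟨E, u, hE⟩ := IsRankOneFactorization.exists_of_coordIdeal_mul_eq_one
    (mul_inv_cancel₀ ne_zero)
  have h0 (i : Fin 2) : algebraMap A K (E i 0) = u i := (hE.algebraMap_apply i 0).trans (mul_one _)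
  have h1 (i : Fin 2) : algebraMap A K (E i 1) = u i * x := hE.algebraMap_apply i 1
  refine ⟨E 0 0, E 1 0, E 0 1, E 1 1, by rw [h0, h1], by rw [h0, h1], ?_⟩
  rw [h0, h0, ← hE.dotProduct_eq_one, vec2_dotProduct]
  simp only [w, cons_val_zero, cons_val_one, cons_val_fin_one, one_mul, mul_comm x]

variable {B : Subalgebra A K}

theorem map_comap_algebraMap_subalgebra (I : Ideal B) :
    (I.comap (algebraMap A B)).map (algebraMap A B) = I := by
  refine le_antisymm Ideal.map_comap_le fun x hx => ?_
  obtain ⟨a, b, c, d, hc, hd, hab⟩ := exists_algebraMap_mul_eq_and_add_mul_eq_one A (x : K)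
  -- The coefficients `c = a x` and `d = b x` lie in the contraction of `I` to `A`.
  have hx_eq : x = algebraMap A B c + algebraMap A B d * x := Subtype.ext <|
    calc (x : K) = (algebraMap A K a + algebraMap A K b * x) * x := by rw [hab, one_mul]
      _ = algebraMap A K c + algebraMap A K d * x := by rw [add_mul, hc, hd]
  have hcB : algebraMap A B c = algebraMap A B a * x := Subtype.ext hc.symm
  have hdB : algebraMap A B d = algebraMap A B b * x := Subtype.ext hd.symm
  rw [hx_eq]
  refine add_mem (Ideal.mem_map_of_mem _ ?_) (Ideal.mul_mem_right _ _ (Ideal.mem_map_of_mem _ ?_))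
  · rw [Ideal.mem_comap, hcB]
    exact I.mul_mem_left _ hx
  · rw [Ideal.mem_comap, hdB]
    exact I.mul_mem_left _ hx

theorem exists_eq_span_pair_subalgebra (I : Ideal B) : ∃ a b, I = Ideal.span {a, b} := by
  rw [← map_comap_algebraMap_subalgebra I]
  obtain ⟨a, b, hab⟩ : ∃ a b, I.comap (algebraMap A B) = Ideal.span {a, b} := by
    obtain h | h := eq_or_ne (I.comap (algebraMap A B)) ⊥
    · exact ⟨0, 0, by rw [h, Set.pair_eq_singleton, Ideal.span_singleton_eq_bot.2 rfl]⟩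
    · obtain ⟨a, ha, ha0⟩ := Submodule.exists_mem_ne_zero_of_ne_bot h
      exact ⟨a, IsDedekindDomain.exists_eq_span_pair ha ha0⟩
  exact ⟨algebraMap A B a, algebraMap A B b, by rw [hab, Ideal.map_span, Set.image_pair]⟩

theorem card_conjClasses_order_ell_eq_classNumber_general (hn : 2 < n)
    (hζ : IsPrimitiveRoot ζ n) (B : Subalgebra A K) (hnB : IsUnit (n : B)) :
    Cardinal.mk {c : ConjClasses (Matrix.SpecialLinearGroup (Fin 2) B) //
        ∃ g, c = ConjClasses.mk g ∧ orderOf g = n ∧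
          ((Matrix.trace (g : Matrix (Fin 2) (Fin 2) B) : B) : K) = ζ + ζ⁻¹} =
      Cardinal.mk (ClassGroup B) := by
  obtain ⟨z, rfl⟩ := exists_units_coe_eq_of_isPrimitiveRoot hζ (by lia) B
  have hz : IsPrimitiveRoot (z : B) n := hζ.of_map_of_injective (f := B.val) Subtype.val_injective
  have hsub := isUnit_sub_inv_of_isPrimitiveRoot hz hn hnB
  have hpred (g : SL(2, B)) : (orderOf g = n ∧
      ((Matrix.trace (g : Matrix (Fin 2) (Fin 2) B) : B) : K) = (z : B) + ((z : B) : K)⁻¹) ↔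
      (g : Matrix (Fin 2) (Fin 2) B).trace = z + ↑z⁻¹ := by
    have hinv : ((↑z⁻¹ : B) : K) = ((z : B) : K)⁻¹ := map_units_inv B.val z
    rw [← hinv, ← Subalgebra.coe_add, Subtype.coe_inj, and_iff_right_iff_imp]
    intro hg
    rw [orderOf_eq_of_trace_eq hsub hg, ← orderOf_units, hz.eq_orderOf]
  simpa only [Cardinal.eq, hpred] using
    nonempty_conjClasses_trace_eq_equiv_classGroup exists_eq_span_pair_subalgebra hsub

end Overring

/-- Let `ℓ` be an odd prime, `K` a number field containing a primitive
`ℓ`-th root of unity `ζ`, and `S` a finite set of finite places of `K` such that `ℓ` is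
invertible in `O = O_{K,S}`.  Then the number of conjugacy classes in `SL₂(O)` of elements
of order exactly `ℓ` and trace `ζ + ζ⁻¹` equals the class number of `O`. -/
theorem card_conjClasses_order_ell_eq_classNumber (K : Type*) [Field K] [NumberField K]
    (ℓ : ℕ) (hℓ : ℓ.Prime) (hℓodd : Odd ℓ)
    (ζ : K) (hζ : IsPrimitiveRoot ζ ℓ)
    (S : Set (HeightOneSpectrum (𝓞 K))) (hS : S.Finite)
    (hℓinv : IsUnit (ℓ : S.integer K)) :
    Nat.card {c : ConjClasses (Matrix.SpecialLinearGroup (Fin 2) (S.integer K)) //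
        ∃ g, c = ConjClasses.mk g ∧ orderOf g = ℓ ∧
          ((Matrix.trace (g : Matrix (Fin 2) (Fin 2) (S.integer K)) : S.integer K) : K)
            = ζ + ζ⁻¹} =
      Nat.card (ClassGroup (S.integer K)) := by
  have hℓ2 : 2 < ℓ := hℓ.two_le.lt_of_ne' (hℓodd.ne_two_of_dvd_nat dvd_rfl)
  exact congrArg Cardinal.toNat
    (card_conjClasses_order_ell_eq_classNumber_general hℓ2 hζ (S.integer K) hℓinv)
end

section
/- Let K be a number field, S a finite set of finite places of K, and ℓ a prime. Then the set of conjugacy classes of elements of order exactly ℓ in SL₂(O_{K,S}) is finite. -/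
open IsDedekindDomain NumberField

/-!
Let `R` have fraction field `K`. Fix a trace `t` and a determinant `d` with `t² ≠ 4d`, and let
`E = K[X] / (X² - tX + d)`, with `ζ` the class of `X`. By the correspondence of Latimer and
MacDuffee, a `2 × 2` matrix over `R` with this trace and determinant is multiplication by `ζ` on an
`R[ζ]`-lattice in `E`, and two such matrices are conjugate over `R` when their lattices differ by a
unit of `E`. Since `t² ≠ 4d`, the algebra `E` is a quadratic extension of `K` or `K × K`, so its
maximal order has finitely many lattice classes by finiteness of class groups. This passes to
`R[ζ]`, as some positive integer multiplies the maximal order into `R[ζ]`.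

Conjugacy classes in `GL₂(R)` split into finitely many classes in `SL₂(R)` because the squares have
finite index in `Rˣ`, which for `S`-integers is Dirichlet's `S`-unit theorem. Only finitely many
traces occur for elements of order dividing `n`, since the eigenvalues are `n`-th roots of unity,
and an element of finite order with `t² = 4` is central.
-/

open scoped Pointwise nonZeroDivisors

section LatticeClasses

/-- Finiteness of the set of `A`-lattices in the algebra `E` up to multiplication by units of `E`
(for `A` an order in a number field `E` these are the ideal classes of `A`, invertible or not):
finitely many submodules meet every class. -/
def HasFinitelyManyLatticeClasses (A E : Type*) [CommRing A] [CommRing E] [Algebra A E] : Prop :=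
  ∃ 𝒩 : Set (Submodule A E), 𝒩.Finite ∧
    ∀ Λ : Submodule A E, Λ.IsLattice E → ∃ α : Eˣ, α • Λ ∈ 𝒩

theorem hasFinitelyManyLatticeClasses_of_finite_classGroup (A F : Type*) [CommRing A]
    [IsDedekindDomain A] [Field F] [Algebra A F] [IsFractionRing A F] [Finite (ClassGroup A)] :
    HasFinitelyManyLatticeClasses A F := by
  let P := (toPrincipalIdeal A F).range
  have : Finite ((FractionalIdeal A⁰ F)ˣ ⧸ P) := .of_equiv _ (ClassGroup.equiv F).toEquiv
  refine ⟨Set.range fun q : (FractionalIdeal A⁰ F)ˣ ⧸ P ↦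
    ((q.out : FractionalIdeal A⁰ F) : Submodule A F), Set.finite_range _, fun Λ hΛ ↦ ?_⟩
  let I : FractionalIdeal A⁰ F := ⟨Λ, FractionalIdeal.isFractional_of_fg hΛ.fg⟩
  have hI : I ≠ 0 := by
    intro h
    have hbot : Λ = ⊥ := (congrArg ((↑) : FractionalIdeal A⁰ F → Submodule A F) h).trans
      FractionalIdeal.coe_zero
    simpa [hbot] using hΛ.span_eq_top
  obtain ⟨⟨_, α, rfl⟩, hα⟩ := QuotientGroup.mk_out_eq_mul P (Units.mk0 I hI)
  refine ⟨α, (Units.mk0 I hI : (FractionalIdeal A⁰ F)ˣ ⧸ P), ?_⟩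
  simp only [hα, Units.val_mul, FractionalIdeal.coe_mul, coe_toPrincipalIdeal,
    FractionalIdeal.coe_spanSingleton, Units.val_mk0]
  rw [mul_comm]
  exact Submodule.span_singleton_mul

theorem mem_submodule_pi_iff {ι : Type*} [Finite ι] {A M : ι → Type*} [∀ i, Semiring (A i)]
    [∀ i, AddCommMonoid (M i)] [∀ i, Module (A i) (M i)] {Λ : Submodule (∀ i, A i) (∀ i, M i)}
    {x : ∀ i, M i} : x ∈ Λ ↔ ∀ i, ∃ y ∈ Λ, y i = x i := by
  classical
  refine ⟨fun hx i ↦ ⟨x, hx, rfl⟩, fun hx ↦ ?_⟩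
  have := Fintype.ofFinite ι
  choose y hy hyx using hx
  have hsum : x = ∑ i, (Pi.single i 1 : ∀ i, A i) • y i := by
    ext j
    rw [Finset.sum_apply, Finset.sum_eq_single j]
    · simp [hyx]
    · intro i _ hij
      simp [Pi.single_eq_of_ne' hij]
    · simp
  exact hsum ▸ Λ.sum_mem fun i _ ↦ Λ.smul_mem _ (hy i)

theorem HasFinitelyManyLatticeClasses.pi {ι : Type*} [Finite ι] {A E : ι → Type*}
    [∀ i, CommRing (A i)] [∀ i, CommRing (E i)] [∀ i, Algebra (A i) (E i)]
    (h : ∀ i, HasFinitelyManyLatticeClasses (A i) (E i)) :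
    HasFinitelyManyLatticeClasses (∀ i, A i) (∀ i, E i) := by
  have (i : ι) : RingHomSurjective (Pi.evalRingHom A i) := ⟨Function.surjective_eval i⟩
  have (i : ι) : RingHomSurjective (Pi.evalRingHom E i) := ⟨Function.surjective_eval i⟩
  choose 𝒩 h𝒩 hmem using h
  let proj (i : ι) : (∀ i, E i) →ₛₗ[Pi.evalRingHom A i] E i :=
    { toFun x := x i
      map_add' _ _ := rfl
      map_smul' _ _ := rfl }
  let f (Λ : Submodule (∀ i, A i) (∀ i, E i)) (i : ι) : Submodule (A i) (E i) := Λ.map (proj i)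
  have hf : Function.Injective f := fun Λ Λ' hΛ ↦ by
    ext x
    have (i : ι) : (∃ y ∈ Λ, y i = x i) ↔ ∃ y ∈ Λ', y i = x i :=
      SetLike.ext_iff.mp (congrFun hΛ i) (x i)
    rw [mem_submodule_pi_iff, forall_congr' this, ← mem_submodule_pi_iff]
  refine ⟨f ⁻¹' Set.univ.pi 𝒩, (Set.Finite.pi h𝒩).preimage hf.injOn, fun Λ hΛ ↦ ?_⟩
  have hlat (i : ι) : (f Λ i).IsLattice (E i) :=
    { fg := hΛ.fg.map (proj i)
      span_eq_top := calc
        _ = (Submodule.span (∀ i, E i) Λ).map (Pi.evalRingHom E i).toSemilinearMap :=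
          (Submodule.map_span _ _).symm
        _ = ⊤ := by
          rw [hΛ.span_eq_top, Submodule.map_top, LinearMap.range_eq_top]
          exact Function.surjective_eval i }
  choose α hα using fun i ↦ hmem i (f Λ i) (hlat i)
  refine ⟨MulEquiv.piUnits.symm α, fun i _ ↦ ?_⟩
  have hsmul : f (MulEquiv.piUnits.symm α • Λ) i = α i • f Λ i :=
    SetLike.coe_injective <|
      (Set.image_image _ _ _).trans (Set.image_image (α i • ·) (proj i) Λ).symm
  exact hsmul ▸ hα i

theorem finite_Icc_of_isFiniteRelIndex {G : Type*} [AddGroup G] (T N : AddSubgroup G)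
    [T.IsFiniteRelIndex N] : (Set.Icc T N).Finite := by
  have : Finite (N ⧸ T.addSubgroupOf N) :=
    AddSubgroup.finiteIndex_iff_finite_quotient.mp inferInstance
  let f (H : AddSubgroup G) : Set (N ⧸ T.addSubgroupOf N) := (↑) '' {x : N | (x : G) ∈ H}
  have le_of_eq {H H' : AddSubgroup G} (hN : H ≤ N) (hT : T ≤ H') (h : f H = f H') : H ≤ H' := by
    intro x hx
    obtain ⟨y, hy, hyx⟩ : ((⟨x, hN hx⟩ : N) : N ⧸ T.addSubgroupOf N) ∈ f H' :=
      h ▸ Set.mem_image_of_mem _ hx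
    have hyxT : -y + ⟨x, hN hx⟩ ∈ T.addSubgroupOf N := QuotientAddGroup.eq.mp hyx
    exact (H'.add_mem_cancel_left (H'.neg_mem hy)).mp (hT hyxT)
  exact Set.Finite.of_finite_image (f := f) (Set.toFinite _) fun H hH H' hH' h ↦
    le_antisymm (le_of_eq hH.2 hH'.1 h) (le_of_eq hH'.2 hH.1 h.symm)

theorem nsmul_mem_span_of_mem_span {A O E : Type*} [CommRing A] [CommRing O] [CommRing E]
    [Algebra A E] [Algebra O E] {D : ℕ}
    (hD : ∀ o : O, D • algebraMap O E o ∈ (algebraMap A E).range) {s : Set E} {x : E}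
    (hx : x ∈ Submodule.span O s) : D • x ∈ Submodule.span A s := by
  induction hx using Submodule.closure_induction with
  | zero => simp
  | add x y _ _ hx hy => simpa only [smul_add] using add_mem hx hy
  | smul_mem o x hx =>
    obtain ⟨a, ha⟩ := hD o
    have : D • o • x = a • x := by
      rw [Algebra.smul_def o, Algebra.smul_def a, ha, smul_mul_assoc]
    exact this ▸ Submodule.smul_mem _ a (Submodule.subset_span hx)

theorem units_smul_span {A E : Type*} [CommRing A] [CommRing E] [Algebra A E] (α : Eˣ) (s : Set E) :
    α • Submodule.span A s = Submodule.span A (α • s) :=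
  Submodule.smul_span (α : E) s

theorem HasFinitelyManyLatticeClasses.of_nsmul_mem {A O E : Type*} [CommRing A] [CommRing O]
    [CommRing E] [Algebra A E] [Algebra O E] [Module.Finite ℤ O]
    (h : HasFinitelyManyLatticeClasses O E) {D : ℕ} (hD : D ≠ 0)
    (hOA : ∀ o : O, D • algebraMap O E o ∈ (algebraMap A E).range) :
    HasFinitelyManyLatticeClasses A E := by
  obtain ⟨𝒩, h𝒩, hmem⟩ := h
  let between (N : Submodule O E) : Set (AddSubgroup E) :=
    Set.Icc (N.toAddSubgroup.map (nsmulAddMonoidHom D)) N.toAddSubgroup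
  have hfin (N : Submodule O E) (hN : N.FG) : (between N).Finite := by
    have := AddSubgroup.isFiniteRelIndex_map_nsmulAddMonoidHom_of_fg
      (Submodule.fg_toAddSubgroup hN) hD
    exact finite_Icc_of_isFiniteRelIndex _ _
  -- The `A`-lattice spanned by `s` is recovered from its intersection with the `O`-lattice `N`
  -- spanned by `s`, and this intersection contains `D • N`.
  refine ⟨⋃ N ∈ {N ∈ 𝒩 | N.FG}, (fun H : AddSubgroup E ↦ Submodule.span A H) '' between N,
    (h𝒩.subset (Set.sep_subset _ _)).biUnion fun N hN ↦ (hfin N hN.2).image _, fun Λ hΛ ↦ ?_⟩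
  obtain ⟨s, rfl⟩ := hΛ.fg
  have hspan : Submodule.span E (s : Set E) = ⊤ := by
    rw [← hΛ.span_eq_top, Submodule.span_span_of_tower]
  obtain ⟨α, hα⟩ := hmem (Submodule.span O s)
    ⟨⟨s, rfl⟩, by rw [Submodule.span_span_of_tower, hspan]⟩
  rw [units_smul_span] at hα
  have hfg : (Submodule.span O (α • (s : Set E))).FG := Submodule.fg_span (s.finite_toSet.image _)
  refine ⟨α, Set.mem_biUnion ⟨hα, hfg⟩ ?_⟩
  rw [units_smul_span]
  set t : Set E := α • (s : Set E)
  refine ⟨(Submodule.span A t).toAddSubgroup ⊓ (Submodule.span O t).toAddSubgroup,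
    ⟨?_, inf_le_right⟩, ?_⟩
  · rintro _ ⟨x, hx, rfl⟩
    exact ⟨nsmul_mem_span_of_mem_span hOA hx, nsmul_mem hx D⟩
  · refine le_antisymm (Submodule.span_le.mpr fun x hx ↦ hx.1) (Submodule.span_mono fun x hx ↦ ?_)
    exact ⟨Submodule.subset_span hx, Submodule.subset_span hx⟩

end LatticeClasses

section Denominators

theorem exists_nsmul_mem_of_fg_of_forall_exists {M : Type*} [AddCommGroup M] [AddGroup.FG M]
    (H : AddSubgroup M) (h : ∀ x, ∃ n ≠ 0, n • x ∈ H) : ∃ D ≠ 0, ∀ x, D • x ∈ H := by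
  have : Finite (M ⧸ H) := AddCommGroup.finite_of_fg_isAddTorsion _ fun q ↦ by
    induction q using QuotientAddGroup.induction_on with
    | H x =>
      obtain ⟨n, hn, hx⟩ := h x
      exact isOfFinAddOrder_iff_nsmul_eq_zero.mpr
        ⟨n, hn.pos, (QuotientAddGroup.eq_zero_iff (n • x)).mpr hx⟩
  have : H.FiniteIndex := AddSubgroup.finiteIndex_iff_finite_quotient.mpr this
  exact ⟨H.index, AddSubgroup.FiniteIndex.index_ne_zero, fun x ↦ H.nsmul_index_mem x⟩

variable (R : Type*) {K E : Type*} [CommRing R] [Field K] [NumberField K] [Algebra R K]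
  [IsFractionRing R K]

theorem exists_nsmul_mem_range_algebraMap (x : K) :
    ∃ n ≠ 0, n • x ∈ (algebraMap R K).range := by
  have := (algebraMap R K).domain_nontrivial
  obtain ⟨a, b, hb, rfl⟩ := IsFractionRing.div_surjective (A := R) x
  have hbK : algebraMap R K b ≠ 0 := IsFractionRing.to_map_ne_zero_of_mem_nonZeroDivisors hb
  have hb_alg : IsAlgebraic ℤ b := by
    rw [← isAlgebraic_algebraMap_iff (IsFractionRing.injective R K),
      IsFractionRing.isAlgebraic_iff ℤ ℚ K]
    exact Algebra.IsAlgebraic.isAlgebraic _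
  obtain ⟨n, hn, c, hc⟩ := hb_alg.exists_nonzero_dvd hb
  have hx : n • (algebraMap R K a / algebraMap R K b) = algebraMap R K (c * a) := by
    have hcK : (n : K) = algebraMap R K b * algebraMap R K c := by
      simpa using congrArg (algebraMap R K) hc
    rw [zsmul_eq_mul, hcK, map_mul]
    field_simp
  refine ⟨n.natAbs, Int.natAbs_ne_zero.mpr hn, ?_⟩
  rw [← natCast_zsmul, Int.natCast_natAbs]
  obtain h | h := abs_choice n <;> rw [h]
  · exact ⟨_, hx.symm⟩
  · exact neg_smul n (_ : K) ▸ neg_mem ⟨_, hx.symm⟩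

variable [CommRing E] [Algebra R E] [Algebra K E] [IsScalarTower R K E]

theorem exists_nsmul_mem_adjoin {s : Set E} (hs : Algebra.adjoin K s = ⊤) (x : E) :
    ∃ n ≠ 0, n • x ∈ Algebra.adjoin R s := by
  have hx : x ∈ Algebra.adjoin K s := hs ▸ Algebra.mem_top
  induction hx using Algebra.adjoin_induction with
  | mem x hx => exact ⟨1, one_ne_zero, by simpa using Algebra.subset_adjoin hx⟩
  | algebraMap k =>
    obtain ⟨n, hn, a, ha⟩ := exists_nsmul_mem_range_algebraMap R k
    refine ⟨n, hn, ?_⟩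
    rw [← map_nsmul, ← ha, ← IsScalarTower.algebraMap_apply]
    exact Subalgebra.algebraMap_mem _ a
  | add x y _ _ hx hy =>
    obtain ⟨m, hm, hx⟩ := hx
    obtain ⟨n, hn, hy⟩ := hy
    refine ⟨n * m, mul_ne_zero hn hm, ?_⟩
    rw [smul_add, mul_smul, mul_comm, mul_smul]
    exact add_mem (nsmul_mem hx n) (nsmul_mem hy m)
  | mul x y _ _ hx hy =>
    obtain ⟨m, hm, hx⟩ := hx
    obtain ⟨n, hn, hy⟩ := hy
    refine ⟨m * n, mul_ne_zero hm hn, ?_⟩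
    rw [← smul_mul_smul_comm]
    exact mul_mem hx hy

theorem HasFinitelyManyLatticeClasses.adjoin {O : Type*} [CommRing O] [Algebra O E]
    [Module.Finite ℤ O] (h : HasFinitelyManyLatticeClasses O E) {s : Set E}
    (hs : Algebra.adjoin K s = ⊤) : HasFinitelyManyLatticeClasses (Algebra.adjoin R s) E := by
  have : AddGroup.FG O := Module.Finite.iff_addGroup_fg.mp ‹_›
  let H : AddSubgroup O := ((Algebra.adjoin R s).toSubring.comap (algebraMap O E)).toAddSubgroup
  obtain ⟨D, hD, hO⟩ := exists_nsmul_mem_of_fg_of_forall_exists H fun o ↦ by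
    obtain ⟨n, hn, ho⟩ := exists_nsmul_mem_adjoin R hs (algebraMap O E o)
    exact ⟨n, hn, show algebraMap O E (n • o) ∈ _ from map_nsmul (algebraMap O E) n o ▸ ho⟩
  exact h.of_nsmul_mem hD fun o ↦
    ⟨⟨D • algebraMap O E o, map_nsmul (algebraMap O E) D o ▸ hO o⟩, rfl⟩

end Denominators

section LatimerMacDuffee

open Module Matrix

theorem finite_image_of_forall_exists_mem {α β γ : Type*} {X : Set α} {f : α → β} {C : Set γ}
    (hC : C.Finite) (r : α → γ → Prop) (hr : ∀ x ∈ X, ∃ c ∈ C, r x c)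
    (hf : ∀ x ∈ X, ∀ y ∈ X, ∀ c, r x c → r y c → f x = f y) : (f '' X).Finite := by
  refine (hC.biUnion (t := fun c ↦ f '' {x ∈ X | r x c}) fun c _ ↦ ?_).subset ?_
  · refine Set.Subsingleton.finite ?_
    rintro _ ⟨x, hx, rfl⟩ _ ⟨y, hy, rfl⟩
    exact hf x hx.1 y hy.1 c hx.2 hy.2
  · rintro _ ⟨x, hx, rfl⟩
    obtain ⟨c, hc, hxc⟩ := hr x hx
    exact Set.mem_biUnion hc ⟨x, ⟨hx, hxc⟩, rfl⟩

variable {R K V ι : Type*} [CommRing R] [Field K] [Algebra R K]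

section Module

variable [IsDomain R] [FaithfulSMul R K] [AddCommGroup V] [Module R V] [Module K V]
  [IsScalarTower R K V]

theorem exists_matrix_map_eq_toMatrix (b : Basis ι K V) {v : ι → V}
    (hv : ∀ j, v j ∈ Submodule.span R (Set.range b)) :
    ∃ P : Matrix ι ι R, P.map (algebraMap R K) = b.toMatrix v := by
  choose P hP using fun i j ↦ (b.mem_span_iff_repr_mem R (v j)).mp (hv j) i
  exact ⟨of P, Matrix.ext hP⟩

variable [Fintype ι] [DecidableEq ι]

theorem isConj_of_span_range_eq {b b' : Basis ι K V}
    (hspan : Submodule.span R (Set.range b) = Submodule.span R (Set.range b')) {T : V →ₗ[K] V}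
    {M M' : Matrix ι ι R} (hM : LinearMap.toMatrix b b T = M.map (algebraMap R K))
    (hM' : LinearMap.toMatrix b' b' T = M'.map (algebraMap R K)) : IsConj M M' := by
  have map_injective : Function.Injective fun P : Matrix ι ι R ↦ P.map (algebraMap R K) :=
    Matrix.map_injective (FaithfulSMul.algebraMap_injective R K)
  obtain ⟨P, hP⟩ := exists_matrix_map_eq_toMatrix (R := R) b' (v := b) fun j ↦
    hspan ▸ Submodule.subset_span ⟨j, rfl⟩
  obtain ⟨Q, hQ⟩ := exists_matrix_map_eq_toMatrix (R := R) b (v := b') fun j ↦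
    hspan ▸ Submodule.subset_span ⟨j, rfl⟩
  have hPQ : P * Q = 1 := map_injective <| by
    simp [Matrix.map_mul, hP, hQ]
  refine ⟨⟨P, Q, hPQ, mul_eq_one_comm.mp hPQ⟩, map_injective ?_⟩
  simp [Matrix.map_mul, hP, ← hM, ← hM', basis_toMatrix_mul_linearMap_toMatrix,
    linearMap_toMatrix_mul_basis_toMatrix]

end Module

variable {E : Type*} [Fintype ι] [DecidableEq ι] [CommRing E] [Algebra R E] [Algebra K E]
  [IsScalarTower R K E]

theorem span_adjoin_restrictScalars {s t : Set E}
    (h : ∀ z ∈ t, ∀ x ∈ s, z * x ∈ Submodule.span R s) :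
    (Submodule.span (Algebra.adjoin R t) s).restrictScalars R = Submodule.span R s := by
  have mul_mem {a x : E} (ha : a ∈ Algebra.adjoin R t) (hx : x ∈ Submodule.span R s) :
      a * x ∈ Submodule.span R s := by
    induction ha using Algebra.adjoin_induction generalizing x with
    | mem z hz =>
      exact (Submodule.map_span_le (LinearMap.mulLeft R z) s _).mpr (h z hz) ⟨x, hx, rfl⟩
    | algebraMap r => exact Algebra.smul_def r x ▸ Submodule.smul_mem _ r hx
    | add a a' _ _ ha ha' => exact add_mul a a' x ▸ add_mem (ha hx) (ha' hx)
    | mul a a' _ _ ha ha' => exact mul_assoc a a' x ▸ ha (ha' hx)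
  refine le_antisymm (fun x hx ↦ ?_) (Submodule.span_le_restrictScalars _ _ _)
  induction hx using Submodule.span_induction with
  | mem x hx => exact Submodule.subset_span hx
  | zero => exact zero_mem _
  | add x y _ _ hx hy => exact add_mem hx hy
  | smul a x _ hx => exact mul_mem a.2 hx

theorem span_adjoin_singleton_range_basis {ζ : E} {b : Basis ι K E} {M : Matrix ι ι R}
    (hM : LinearMap.toMatrix b b (LinearMap.mulLeft K ζ) = M.map (algebraMap R K)) :
    (Submodule.span (Algebra.adjoin R {ζ}) (Set.range b)).restrictScalars R =
      Submodule.span R (Set.range b) := by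
  refine span_adjoin_restrictScalars ?_
  rintro z (rfl : z = ζ) _ ⟨j, rfl⟩
  have hj : ∑ i, M i j • b i = z * b j := by
    rw [← b.sum_repr (z * b j)]
    refine Finset.sum_congr rfl fun i _ ↦ ?_
    rw [← algebraMap_smul K, ← Matrix.map_apply (f := algebraMap R K), ← hM]
    simp [LinearMap.toMatrix_apply]
  exact hj ▸ sum_mem fun i _ ↦ Submodule.smul_mem _ _ (Submodule.subset_span ⟨i, rfl⟩)

variable [IsDomain R] [FaithfulSMul R K]

theorem finite_conjClasses_of_hasFinitelyManyLatticeClasses {ζ : E}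
    (h : HasFinitelyManyLatticeClasses (Algebra.adjoin R {ζ}) E) :
    (ConjClasses.mk '' {M : Matrix ι ι R | ∃ b : Basis ι K E,
      LinearMap.toMatrix b b (LinearMap.mulLeft K ζ) = M.map (algebraMap R K)}).Finite := by
  obtain ⟨𝒩, h𝒩, hmem⟩ := h
  refine finite_image_of_forall_exists_mem h𝒩 (fun M N ↦ ∃ b : Basis ι K E,
    LinearMap.toMatrix b b (LinearMap.mulLeft K ζ) = M.map (algebraMap R K) ∧
      Submodule.span _ (Set.range b) = N) ?_ ?_
  · rintro M ⟨b, hb⟩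
    obtain ⟨α, hα⟩ := hmem (Submodule.span _ (Set.range b))
      ⟨Submodule.fg_span (Set.finite_range b), by
        rw [Submodule.span_span_of_tower, ← Submodule.span_span_of_tower K, b.span_eq]; simp⟩
    refine ⟨_, hα, b.map (DistribMulAction.toLinearEquiv K E α), ?_, ?_⟩
    · rw [← hb]
      ext i j
      simp [LinearMap.toMatrix_apply, Units.smul_def, mul_left_comm ζ]
    · rw [units_smul_span, Basis.coe_map, Set.range_comp]
      rfl
  · rintro M - M' - N ⟨b, hb, hbN⟩ ⟨b', hb', hbN'⟩
    refine ConjClasses.mk_eq_mk_iff_isConj.mpr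
      (isConj_of_span_range_eq (b := b) (b' := b') ?_ hb hb')
    rw [← span_adjoin_singleton_range_basis hb, hbN, ← hbN', span_adjoin_singleton_range_basis hb']

end LatimerMacDuffee

section TwoByTwo

open Module Matrix Polynomial

theorem exists_linearEquiv_map_eq_mul {K V E : Type*} [Field K] [AddCommGroup V] [Module K V]
    [CommRing E] [Algebra K E] (hV : finrank K V = 2) {ζ : E} {b₀ : Basis (Fin 2) K E}
    (hb₀ : ⇑b₀ = ![1, ζ]) {T : V →ₗ[K] V} (hT : ∀ a : K, T ≠ a • 1) {p q : K}
    (hTpq : ∀ v, T (T v) = p • T v + q • v) (hζ : ζ * ζ = p • ζ + q • 1) :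
    ∃ e : V ≃ₗ[K] E, ∀ v, e (T v) = ζ * e v := by
  obtain ⟨v, hv⟩ : ∃ v, LinearIndependent K ![v, T v] := by
    by_contra! h
    obtain ⟨a, ha⟩ := LinearMap.exists_eq_smul_id_of_forall_notLinearIndependent h
    exact hT a ha
  let b : Basis (Fin 2) K V := basisOfLinearIndependentOfCardEqFinrank hv (by simp [hV])
  have hb : ⇑b = ![v, T v] := coe_basisOfLinearIndependentOfCardEqFinrank hv _
  let e : V ≃ₗ[K] E := b.equiv b₀ (.refl _)
  have he (j : Fin 2) : e (![v, T v] j) = ![1, ζ] j := by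
    rw [← hb, ← hb₀]
    exact b.equiv_apply j b₀ (.refl _)
  have hev : e v = 1 := he 0
  have heTv : e (T v) = ζ := he 1
  have intertwines : e.toLinearMap ∘ₗ T = LinearMap.mulLeft K ζ ∘ₗ e.toLinearMap := by
    refine b.ext fun j ↦ ?_
    rw [hb]
    fin_cases j <;> simp [hTpq, hev, heTv, hζ]
  exact ⟨e, LinearMap.congr_fun intertwines⟩

theorem mulVec_mulVec_self_fin_two {R : Type*} [CommRing R] (M : Matrix (Fin 2) (Fin 2) R)
    (v : Fin 2 → R) : M *ᵥ M *ᵥ v = M.trace • M *ᵥ v + (-M.det) • v := by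
  nontriviality R
  have cayleyHamilton : M * M - M.trace • M + M.det • 1 = 0 := by
    simpa [charpoly_fin_two, sq, Algebra.smul_def] using M.aeval_self_charpoly
  have h := congrArg (· *ᵥ v) cayleyHamilton
  simp only [add_mulVec, sub_mulVec, smul_mulVec, one_mulVec, zero_mulVec, ← mulVec_mulVec] at h
  rw [neg_smul, ← sub_eq_zero, ← h]
  abel

theorem exists_basis_toMatrix_mulLeft_eq {K E : Type*} [Field K] [CommRing E] [Algebra K E]
    {ζ : E} {b₀ : Basis (Fin 2) K E} (hb₀ : ⇑b₀ = ![1, ζ]) {M : Matrix (Fin 2) (Fin 2) K}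
    (hM : M ∉ Set.range (scalar (Fin 2))) (hζ : ζ * ζ = M.trace • ζ + (-M.det) • 1) :
    ∃ b : Basis (Fin 2) K E, LinearMap.toMatrix b b (LinearMap.mulLeft K ζ) = M := by
  have toLin_ne (a : K) : toLin' M ≠ a • 1 := fun ha ↦ hM ⟨a, by
    rw [← LinearMap.toMatrix'_algebraMap, Algebra.algebraMap_eq_smul_one, ← ha,
      LinearMap.toMatrix'_toLin']⟩
  obtain ⟨e, he⟩ := exists_linearEquiv_map_eq_mul (by simp) hb₀ toLin_ne
    (mulVec_mulVec_self_fin_two M) hζ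
  refine ⟨(Pi.basisFun K (Fin 2)).map e, Matrix.ext fun i j ↦ ?_⟩
  simp [LinearMap.toMatrix_apply, ← he]

theorem exists_basis_pi_fin_two {K : Type*} [Field K] {x y : K} (hxy : x ≠ y) :
    ∃ b : Basis (Fin 2) K (Fin 2 → K), ⇑b = ![1, ![x, y]] := by
  have hlin : LinearIndependent K ![(1 : Fin 2 → K), ![x, y]] :=
    LinearIndependent.pair_iff.mpr fun p q hpq ↦ by
      have hx : p + q * x = 0 := by simpa using congrFun hpq 0
      have hy : p + q * y = 0 := by simpa using congrFun hpq 1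
      have hq : q * (x - y) = 0 := by linear_combination hx - hy
      obtain rfl : q = 0 := (mul_eq_zero.mp hq).resolve_right (sub_ne_zero.mpr hxy)
      exact ⟨by simpa using hx, rfl⟩
  exact ⟨basisOfLinearIndependentOfCardEqFinrank hlin (by simp),
    coe_basisOfLinearIndependentOfCardEqFinrank hlin _⟩

theorem coe_quadraticAlgebra_basis {R : Type*} [CommRing R] (a b : R) :
    ⇑(QuadraticAlgebra.basis a b) = ![1, QuadraticAlgebra.omega] := by
  funext j
  refine (QuadraticAlgebra.basis a b).repr.injective ?_
  ext k
  fin_cases j <;> fin_cases k <;> simp [QuadraticAlgebra.re_one, QuadraticAlgebra.im_one]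

theorem mem_range_scalar_fin_two_iff {R : Type*} [Semiring R] {M : Matrix (Fin 2) (Fin 2) R} :
    M ∈ Set.range (scalar (Fin 2)) ↔ M 0 1 = 0 ∧ M 1 0 = 0 ∧ M 0 0 = M 1 1 := by
  constructor
  · rintro ⟨a, rfl⟩
    simp
  · rintro ⟨h01, h10, h⟩
    exact ⟨M 1 1, by ext i j; fin_cases i <;> fin_cases j <;> simp [h01, h10, h]⟩

theorem trace_sq_eq_of_mem_range_scalar {R : Type*} [CommRing R] {M : Matrix (Fin 2) (Fin 2) R}
    (hM : M ∈ Set.range (scalar (Fin 2))) : M.trace ^ 2 = 4 * M.det := by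
  obtain ⟨a, rfl⟩ := hM
  simp only [scalar_apply, trace_diagonal, det_diagonal, Fin.sum_univ_two, Fin.prod_univ_two]
  ring

theorem finite_conjClasses_trace_det_of_basis {R K E O : Type*} [CommRing R] [Field K]
    [NumberField K] [Algebra R K] [IsFractionRing R K] [CommRing E] [Algebra R E] [Algebra K E]
    [IsScalarTower R K E] [CommRing O] [Algebra O E] [Module.Finite ℤ O]
    (h : HasFinitelyManyLatticeClasses O E) {ζ : E} {b₀ : Basis (Fin 2) K E}
    (hb₀ : ⇑b₀ = ![1, ζ]) {t d : R} (hζ : ζ * ζ = t • ζ + (-d) • 1) :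
    (ConjClasses.mk '' {M : Matrix (Fin 2) (Fin 2) R |
      M.trace = t ∧ M.det = d ∧ M ∉ Set.range (scalar (Fin 2))}).Finite := by
  have hinj := IsFractionRing.injective R K
  have : IsDomain R := hinj.isDomain
  have hadjoin : Algebra.adjoin K {ζ} = ⊤ := by
    rw [← Algebra.toSubmodule_eq_top, eq_top_iff, ← b₀.span_eq, hb₀, Submodule.span_le]
    rintro _ ⟨j, rfl⟩
    fin_cases j
    · exact one_mem (Algebra.adjoin K {ζ})
    · exact Algebra.self_mem_adjoin_singleton K ζ
  refine (finite_conjClasses_of_hasFinitelyManyLatticeClasses (K := K) (ι := Fin 2)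
    (h.adjoin R hadjoin)).subset (Set.image_mono ?_)
  rintro M ⟨rfl, rfl, hM⟩
  refine exists_basis_toMatrix_mulLeft_eq hb₀ ?_ ?_
  · rw [mem_range_scalar_fin_two_iff] at hM ⊢
    simpa [hinj.eq_iff, map_eq_zero_iff _ hinj] using hM
  · have hdet : algebraMap R K M.det = (M.map (algebraMap R K)).det := RingHom.map_det _ M
    have htr : algebraMap R K M.trace = (M.map (algebraMap R K)).trace := AddMonoidHom.map_trace _ M
    rw [← hdet, ← htr, ← map_neg, algebraMap_smul, algebraMap_smul, hζ]

theorem finite_conjClasses_trace_det {R : Type*} (K : Type*) [CommRing R] [Field K]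
    [NumberField K] [Algebra R K] [IsFractionRing R K] {t d : R} (htd : t ^ 2 ≠ 4 * d) :
    (ConjClasses.mk '' {M : Matrix (Fin 2) (Fin 2) R | M.trace = t ∧ M.det = d}).Finite := by
  have hsub : {M : Matrix (Fin 2) (Fin 2) R | M.trace = t ∧ M.det = d} ⊆ {M |
      M.trace = t ∧ M.det = d ∧ M ∉ Set.range (scalar (Fin 2))} := by
    rintro _ ⟨rfl, rfl⟩
    exact ⟨rfl, rfl, fun hM ↦ htd (trace_sq_eq_of_mem_range_scalar hM)⟩
  refine Set.Finite.subset ?_ (Set.image_mono hsub)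
  let τ := algebraMap R K t
  let δ := algebraMap R K d
  by_cases hroot : ∃ x : K, x ^ 2 = -δ + τ * x
  · obtain ⟨x, hx⟩ := hroot
    have hdistinct : x ≠ τ - x := fun h ↦ htd <| IsFractionRing.injective R K <| by
      rw [map_pow, map_mul, map_ofNat]
      change τ ^ 2 = 4 * δ
      linear_combination (2 * x - τ) * h - 4 * hx
    obtain ⟨b₀, hb₀⟩ := exists_basis_pi_fin_two hdistinct
    refine finite_conjClasses_trace_det_of_basis (O := Fin 2 → 𝓞 K)
      (.pi fun _ ↦ hasFinitelyManyLatticeClasses_of_finite_classGroup (𝓞 K) K) hb₀ ?_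
    ext j
    suffices h : ![x, τ - x] j * ![x, τ - x] j = τ * ![x, τ - x] j - δ by
      simpa [Algebra.smul_def, sub_eq_add_neg] using h
    fin_cases j
    · change x * x = τ * x - δ
      linear_combination hx
    · change (τ - x) * (τ - x) = τ * (τ - x) - δ
      linear_combination hx
  · have : Fact (∀ x : K, x ^ 2 ≠ -δ + τ * x) := ⟨not_exists.mp hroot⟩
    let E := QuadraticAlgebra K (-δ) τ
    have : NumberField E := .of_module_finite K E
    refine finite_conjClasses_trace_det_of_basis
      (hasFinitelyManyLatticeClasses_of_finite_classGroup (𝓞 E) E)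
      (coe_quadraticAlgebra_basis (-δ) τ) ?_
    rw [← algebraMap_smul K t, ← algebraMap_smul K (-d), map_neg, add_comm]
    exact QuadraticAlgebra.omega_mul_omega_eq_add

end TwoByTwo

section SpecialLinearGroup

open Matrix

variable {ι R : Type*} [Fintype ι] [DecidableEq ι] [CommRing R]

theorem isConj_of_det_eq_pow_card {g h : SpecialLinearGroup ι R} {u : GL ι R}
    (hu : SemiconjBy (u : Matrix ι ι R) g h) {a : Rˣ}
    (ha : a ^ Fintype.card ι = GeneralLinearGroup.det u) : IsConj g h := by
  have hdet : ((a⁻¹ : Rˣ) • (u : Matrix ι ι R)).det = 1 := by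
    rw [Units.smul_def, det_smul, ← GeneralLinearGroup.val_det_apply, ← ha,
      ← Units.val_pow_eq_pow_val, ← Units.val_mul, inv_pow, inv_mul_cancel, Units.val_one]
  let s : SpecialLinearGroup ι R := ⟨(a⁻¹ : Rˣ) • (u : Matrix ι ι R), hdet⟩
  have hs : (s : Matrix ι ι R) * g = h * s := by
    rw [smul_mul_assoc, hu.eq, mul_smul_comm]
  exact ⟨toUnits s, Subtype.ext hs⟩

theorem finite_conjClasses_specialLinearGroup
    [(powMonoidHom (Fintype.card ι) : Rˣ →* Rˣ).range.FiniteIndex]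
    {X : Set (SpecialLinearGroup ι R)}
    (hX : (ConjClasses.mk '' ((↑) '' X : Set (Matrix ι ι R))).Finite) :
    (ConjClasses.mk '' X).Finite := by
  let P := (powMonoidHom (Fintype.card ι) : Rˣ →* Rˣ).range
  refine finite_image_of_forall_exists_mem (hX.prod (Set.finite_univ (α := Rˣ ⧸ P)))
    (fun g c ↦ ∃ u : GL ι R,
      SemiconjBy (u : Matrix ι ι R) g c.1.out ∧ (GeneralLinearGroup.det u : Rˣ ⧸ P) = c.2) ?_ ?_
  · intro g hg
    obtain ⟨u, hu⟩ : IsConj (g : Matrix ι ι R) (ConjClasses.mk (g : Matrix ι ι R)).out :=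
      (Quotient.mk_out (s := IsConj.setoid _) (g : Matrix ι ι R)).symm
    exact ⟨(_, GeneralLinearGroup.det u), ⟨⟨g, ⟨g, hg, rfl⟩, rfl⟩, trivial⟩, u, hu, rfl⟩
  · rintro g - h - c ⟨u, hu, huc⟩ ⟨v, hv, hvc⟩
    obtain ⟨a, ha⟩ := QuotientGroup.eq.mp (hvc.trans huc.symm)
    refine ConjClasses.mk_eq_mk_iff_isConj.mpr
      (isConj_of_det_eq_pow_card (u := v⁻¹ * u) (a := a) ?_ ?_)
    · exact hv.units_inv_symm_left.mul_left hu
    · simpa using ha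

theorem finite_center_specialLinearGroup [IsDomain R] :
    (Subgroup.center (SpecialLinearGroup ι R) : Set (SpecialLinearGroup ι R)).Finite := by
  have : NeZero (max (Fintype.card ι) 1) := ⟨by simp⟩
  have : Finite (Subgroup.center (SpecialLinearGroup ι R)) :=
    .of_equiv _ SpecialLinearGroup.center_equiv_rootsOfUnity.symm.toEquiv
  exact Set.toFinite _

end SpecialLinearGroup

section FiniteOrder

open Matrix Polynomial

theorem finite_setOf_forall_mem_card_eq {α : Type*} {T : Set α} (hT : T.Finite) (k : ℕ) :
    {s : Multiset α | s.card = k ∧ ∀ x ∈ s, x ∈ T}.Finite := by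
  classical
  refine (Set.finite_Iic (k • hT.toFinset.val)).subset ?_
  rintro s ⟨rfl, hs⟩
  refine Multiset.le_iff_count.mpr fun x ↦ ?_
  by_cases hx : x ∈ s
  · have hxT : x ∈ hT.toFinset.val := hT.mem_toFinset.mpr (hs x hx)
    rw [Multiset.count_nsmul, Multiset.count_eq_one_of_mem hT.toFinset.nodup hxT, mul_one]
    exact Multiset.count_le_card x s
  · simp [Multiset.count_eq_zero_of_notMem hx]

variable {ι : Type*} [Fintype ι] [DecidableEq ι]

theorem pow_eq_one_of_mem_roots_charpoly {F : Type*} [Field F] {M : Matrix ι ι F} {n : ℕ}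
    (hM : M ^ n = 1) {x : F} (hx : x ∈ M.charpoly.roots) : x ^ n = 1 := by
  cases isEmpty_or_nonempty ι
  · simp at hx
  have hspec : x ^ n ∈ spectrum F (M ^ n) :=
    spectrum.pow_mem_pow M n (mem_spectrum_iff_isRoot_charpoly.mpr (isRoot_of_mem_roots hx))
  rw [hM, spectrum.one_eq] at hspec
  exact hspec

theorem finite_image_trace_setOf_pow_eq_one {R : Type*} [CommRing R] [IsDomain R] {n : ℕ}
    (hn : n ≠ 0) : (trace '' {M : Matrix ι ι R | M ^ n = 1}).Finite := by
  let F := AlgebraicClosure (FractionRing R)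
  let f : R →+* F := (algebraMap (FractionRing R) F).comp (algebraMap R (FractionRing R))
  have hf : Function.Injective f :=
    (algebraMap (FractionRing R) F).injective.comp (IsFractionRing.injective R _)
  have hroots : {x : F | x ^ n = 1}.Finite :=
    (nthRootsFinset n (1 : F)).finite_toSet.subset fun x hx ↦ (mem_nthRootsFinset hn.pos _).mpr hx
  refine Set.Finite.of_finite_image (f := f) ?_ hf.injOn
  refine ((finite_setOf_forall_mem_card_eq hroots (Fintype.card ι)).image Multiset.sum).subset ?_
  rintro _ ⟨_, ⟨M, hM, rfl⟩, rfl⟩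
  have hfM : f.mapMatrix M ^ n = 1 := by rw [← map_pow, hM, map_one]
  refine ⟨(f.mapMatrix M).charpoly.roots,
    ⟨?_, fun x hx ↦ pow_eq_one_of_mem_roots_charpoly hfM hx⟩, ?_⟩
  · rw [IsAlgClosed.card_roots_eq_natDegree, charpoly_natDegree_eq_dim]
  · rw [← trace_eq_sum_roots_charpoly]
    exact (AddMonoidHom.map_trace f.toAddMonoidHom M).symm

theorem mem_range_scalar_of_pow_eq_one_of_discr_eq_zero {R : Type*} [CommRing R] [IsDomain R]
    [CharZero R] {M : Matrix (Fin 2) (Fin 2) R} {n : ℕ} (hn : n ≠ 0) (hM : M ^ n = 1)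
    (hdiscr : M.discr = 0) : M ∈ Set.range (scalar (Fin 2)) := by
  let f : R →+* FractionRing R := algebraMap R (FractionRing R)
  have hf : Function.Injective f := IsFractionRing.injective R _
  have : CharZero (FractionRing R) := charZero_of_injective_algebraMap hf
  have hfM : f.mapMatrix M ^ n = 1 := by rw [← map_pow, hM, map_one]
  by_contra hscalar
  let g : GL (Fin 2) (FractionRing R) := .ofPowEqOne (f.mapMatrix M) n hfM hn
  have hg : g.IsParabolic := by
    constructor
    · rw [mem_range_scalar_fin_two_iff] at hscalar ⊢
      simpa [g, hf.eq_iff, map_eq_zero_iff f hf] using hscalar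
    · calc (f.mapMatrix M).discr
        _ = f M.discr := by simp [discr_fin_two, trace_fin_two, det_fin_two, map_ofNat]
        _ = 0 := by rw [hdiscr, map_zero]
  refine (hg.pow hn).1 ⟨1, ?_⟩
  simp [g]

end FiniteOrder

section SUnits

theorem subgroup_fg_of_fg_inf_ker {G H : Type*} [CommGroup G] [CommGroup H] [Group.FG H]
    (f : G →* H) {N : Subgroup G} (hN : (N ⊓ f.ker).FG) : N.FG := by
  have : Module.Finite ℤ (Additive H) := Module.Finite.iff_addGroup_fg.mpr inferInstance
  rw [Subgroup.fg_iff_add_fg, ← AddSubgroup.toIntSubmodule_toAddSubgroup N.toAddSubgroup,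
    ← Submodule.fg_iff_addSubgroup_fg]
  refine Submodule.fg_of_fg_map_of_fg_inf_ker (MonoidHom.toAdditive f).toIntLinearMap
    (IsNoetherian.noetherian _) ?_
  rw [AddMonoidHom.coe_toIntLinearMap_ker, MonoidHom.coe_toAdditive_ker, ← map_inf,
    Submodule.fg_iff_addSubgroup_fg, AddSubgroup.toIntSubmodule_toAddSubgroup]
  exact (Subgroup.fg_iff_add_fg _).mp hN

variable {A : Type*} (K : Type*) [CommRing A] [IsDedekindDomain A] [Field K] [Algebra A K]
  [IsFractionRing A K]

theorem fg_unit_empty [Group.FG Aˣ] : ((∅ : Set (HeightOneSpectrum A)).unit K).FG := by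
  let e : A ≃ₐ[A] (∅ : Set (HeightOneSpectrum A)).integer K :=
    (Algebra.botEquivOfInjective (IsFractionRing.injective A K)).symm.trans
      (Subalgebra.equivOfEq _ _ (integer_empty A K).symm)
  let f := (Units.mapEquiv e.toMulEquiv).trans (Set.unitEquivUnitsInteger ∅ K).symm
  exact (Group.fg_iff_subgroup_fg _).mp (Group.fg_of_surjective (f := f.toMonoidHom) f.surjective)

theorem fg_units_integer [Group.FG Aˣ] {S : Set (HeightOneSpectrum A)} (hS : S.Finite) :
    Group.FG (S.integer K)ˣ := by
  have : Finite S := hS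
  let ord : Kˣ →* S → Multiplicative ℤ := .pi fun v ↦ v.1.valuationOfNeZero
  have mem_ker_ord {x : Kˣ} : x ∈ ord.ker ↔ ∀ v ∈ S, v.valuation K (x : K) = 1 := by
    simp_rw [MonoidHom.mem_ker, funext_iff, Subtype.forall,
      ← HeightOneSpectrum.valuationOfNeZero_eq, ← WithZero.coe_one, WithZero.coe_inj]
    rfl
  have hker : S.unit K ⊓ ord.ker = (∅ : Set (HeightOneSpectrum A)).unit K := by
    ext x
    refine ⟨fun hx v _ ↦ ?_, fun hx ↦
      ⟨fun v _ ↦ hx v (Set.notMem_empty v), mem_ker_ord.mpr fun v _ ↦ hx v (Set.notMem_empty v)⟩⟩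
    by_cases hv : v ∈ S
    · exact mem_ker_ord.mp hx.2 v hv
    · exact hx.1 v hv
  have : Group.FG (S.unit K) :=
    (Group.fg_iff_subgroup_fg _).mpr (subgroup_fg_of_fg_inf_ker ord (hker ▸ fg_unit_empty K))
  exact Group.fg_of_surjective (f := (S.unitEquivUnitsInteger K).toMonoidHom)
    (S.unitEquivUnitsInteger K).surjective

theorem finiteIndex_range_powMonoidHom_units_integer [Group.FG Aˣ] {S : Set (HeightOneSpectrum A)}
    (hS : S.Finite) {n : ℕ} (hn : n ≠ 0) :
    (powMonoidHom n : (S.integer K)ˣ →* (S.integer K)ˣ).range.FiniteIndex :=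
  have := fg_units_integer K hS
  Subgroup.finiteIndex_range_powMonoidHom_of_fg (S.integer K)ˣ hn

end SUnits

open Matrix in
theorem finite_conjClasses_order_ell_general {R : Type*} (K : Type*) [CommRing R] [Field K]
    [NumberField K] [Algebra R K] [IsFractionRing R K]
    [(powMonoidHom 2 : Rˣ →* Rˣ).range.FiniteIndex] {n : ℕ} (hn : n ≠ 0) :
    (ConjClasses.mk '' {g : SpecialLinearGroup (Fin 2) R | g ^ n = 1}).Finite := by
  have : IsDomain R := (IsFractionRing.injective R K).isDomain
  have : CharZero R := (algebraMap R K).charZero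
  have : (powMonoidHom (Fintype.card (Fin 2)) : Rˣ →* Rˣ).range.FiniteIndex := ‹_›
  let T : Set R := {t ∈ trace '' {M : Matrix (Fin 2) (Fin 2) R | M ^ n = 1} | t ^ 2 ≠ 4 * 1}
  let X (t : R) : Set (SpecialLinearGroup (Fin 2) R) := {g | trace g.1 = t}
  have hT : T.Finite := (finite_image_trace_setOf_pow_eq_one hn).subset (Set.sep_subset _ _)
  have hX (t : R) (ht : t ∈ T) : (ConjClasses.mk '' X t).Finite := by
    refine finite_conjClasses_specialLinearGroup
      ((finite_conjClasses_trace_det K ht.2).subset (Set.image_mono ?_))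
    rintro _ ⟨g, hg, rfl⟩
    exact ⟨hg, g.det_coe⟩
  refine ((hT.biUnion hX).union (finite_center_specialLinearGroup.image ConjClasses.mk)).subset ?_
  rintro _ ⟨g, hg, rfl⟩
  have hgM : g.1 ^ n = 1 := congrArg Subtype.val hg
  by_cases htr : g.1.trace ^ 2 = 4 * 1
  · obtain ⟨a, ha⟩ := mem_range_scalar_of_pow_eq_one_of_discr_eq_zero hn hgM
      (by simp [discr_fin_two, htr])
    exact .inr ⟨g, Matrix.SpecialLinearGroup.mem_center_iff.mpr
      ⟨a, by simpa [← ha] using g.det_coe, ha⟩, rfl⟩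
  · exact .inl (Set.mem_biUnion ⟨⟨g.1, hgM, rfl⟩, htr⟩ ⟨g, rfl, rfl⟩)

/-- For a number field `K`, a finite set `S` of finite places of `K`, and a
prime `ℓ`, the set of conjugacy classes of elements of order exactly `ℓ` in `SL₂(O_{K,S})`
is finite. -/
theorem finite_conjClasses_order_ell (K : Type*) [Field K] [NumberField K]
    (S : Set (HeightOneSpectrum (𝓞 K))) (hS : S.Finite)
    (ℓ : ℕ) (hℓ : ℓ.Prime) :
    {c : ConjClasses (Matrix.SpecialLinearGroup (Fin 2) (S.integer K)) |
      ∃ g, c = ConjClasses.mk g ∧ orderOf g = ℓ}.Finite := by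
  have : Group.FG (𝓞 K)ˣ := Group.fg_iff_monoid_fg.mpr inferInstance
  have := finiteIndex_range_powMonoidHom_units_integer K hS two_ne_zero
  exact (finite_conjClasses_order_ell_general K hℓ.ne_zero).subset fun _ ⟨g, hc, hg⟩ ↦
    ⟨g, hg ▸ pow_orderOf_eq_one g, hc.symm⟩
end

section
/- Let ℓ be an odd prime, K a number field containing a primitive ℓ-th root of unity, and S a finite set of finite places of K such that ℓ is invertible in O = O_{K,S}. Then the number of conjugacy classes of subgroups of order ℓ in SL₂(O) equals the number of orbits of the ideal class group Cl(O) under the inversion involution c ↦ c⁻¹. -/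
open IsDedekindDomain NumberField

open scoped Pointwise

/-- The setoid on a group identifying each element with its inverse (the orbits of the
inversion involution `c ↦ c⁻¹`). -/
def invSetoid (G : Type*) [Group G] : Setoid G where
  r a b := b = a ∨ b = a⁻¹
  iseqv := by
    constructor
    · exact fun a => Or.inl rfl
    · rintro a b (rfl | rfl) <;> simp
    · rintro a b c (rfl | rfl) (rfl | rfl) <;> simp

/-!
Let `ζ` be a primitive `n`-th root of unity, with `n > 2` invertible in the Dedekind domain `R`. An
element of order `n` in `SL₂(R)` has trace `w + w⁻¹` for a power `w` of `ζ`, and `w - w⁻¹` is a unit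
because `n` is; so the element acts as `w` on the image and as `w⁻¹` on the kernel of an idempotent
`e` of rank one. Thus cyclic subgroups of order `n` correspond to idempotents of rank one up to the
exchange of `e` and `1 - e`. The image of `e` is an invertible module whose class determines `e` up
to conjugation in `SL₂(R)`, and every class occurs because ideals of `R` are generated by two
elements. Since image and kernel of `e` add up to `R²`, the exchange of `e` and `1 - e` inverts the
class. Rings of `S`-integers are covered because every ring between a Dedekind domain and its
fraction field is Dedekind.
-/

open Matrix FractionalIdeal

open scoped nonZeroDivisors MatrixGroups

section Overring

variable {A K : Type*} [CommRing A] [IsDedekindDomain A] [Field K] [Algebra A K]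
  [IsFractionRing A K]

/-- The elements `q` and `1 - r` lie in the ideal of denominators of `x`, which is inverse to the
fractional ideal `(1, x)`; the identity `(1 - r) + q x = 1` witnesses this. -/
theorem exists_mul_eq_and_one_sub_mul_eq (x : K) :
    ∃ q r s : A, algebraMap A K q * x = algebraMap A K r ∧
      (1 - algebraMap A K r) * x = algebraMap A K s := by
  set I : FractionalIdeal A⁰ K := spanSingleton A⁰ 1 + spanSingleton A⁰ x with hI
  have one_mem : (1 : K) ∈ I := le_sup_left (b := spanSingleton A⁰ x) (mem_spanSingleton_self A⁰ 1)
  have x_mem : x ∈ I := le_sup_right (a := spanSingleton A⁰ (1 : K)) (mem_spanSingleton_self A⁰ x)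
  have hI0 : I ≠ 0 := fun h => one_ne_zero ((mem_zero_iff A⁰).1 (h ▸ one_mem))
  have isInteger_mul {c y : K} (hc : c ∈ I⁻¹) (hy : y ∈ I) : ∃ t : A, algebraMap A K t = c * y :=
    (mem_one_iff A⁰).1 ((mem_inv_iff hI0).1 hc y hy)
  have h1 : (1 : K) ∈ spanSingleton A⁰ 1 * I⁻¹ + spanSingleton A⁰ x * I⁻¹ := by
    rw [← add_mul, ← hI, mul_inv_cancel₀ hI0]
    exact one_mem_one A⁰
  obtain ⟨_, hp, _, hq, hpq⟩ := (mem_add _ _ _).1 h1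
  obtain ⟨p, hpI, rfl⟩ := mem_singleton_mul.1 hp
  obtain ⟨q, hqI, rfl⟩ := mem_singleton_mul.1 hq
  obtain ⟨q', hq'⟩ := isInteger_mul hqI one_mem
  obtain ⟨r, hr⟩ := isInteger_mul hqI x_mem
  obtain ⟨s, hs⟩ := isInteger_mul hpI x_mem
  refine ⟨q', r, s, by rw [hq', hr, mul_one], ?_⟩
  rw [hs, hr]
  linear_combination -x * hpq

theorem exists_one_sub_mul_eq_of_mem (B : Subalgebra A K) {J : Ideal B} {y : B} (hy : y ∈ J) :
    ∃ r ∈ J.comap (algebraMap A B), ∃ s ∈ J.comap (algebraMap A B),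
      (1 - algebraMap A K r) * y = algebraMap A K s := by
  obtain ⟨q, r, s, hr, hs⟩ := exists_mul_eq_and_one_sub_mul_eq (A := A) (y : K)
  have hr' : algebraMap A B r = algebraMap A B q * y := Subtype.ext hr.symm
  have hs' : algebraMap A B s = (1 - algebraMap A B r) * y := Subtype.ext hs.symm
  exact ⟨r, Ideal.mem_comap.2 (hr' ▸ J.mul_mem_left _ hy), s,
    Ideal.mem_comap.2 (hs' ▸ J.mul_mem_left _ hy), hs⟩

theorem comap_algebraMap_ne_bot (B : Subalgebra A K) {J : Ideal B} (hJ : J ≠ ⊥) :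
    J.comap (algebraMap A B) ≠ ⊥ := by
  obtain ⟨y, hyJ, hy⟩ := Submodule.exists_mem_ne_zero_of_ne_bot hJ
  obtain ⟨r, hr, s, hs, h⟩ := exists_one_sub_mul_eq_of_mem B hyJ
  intro hbot
  rw [hbot, Ideal.mem_bot] at hr hs
  rw [hr, hs, map_zero, sub_zero, one_mul] at h
  exact hy (Subtype.ext h)

theorem mem_inv_of_mem_inv_comap (B : Subalgebra A K) {J : Ideal B} (hJ : J ≠ ⊥) {c : K}
    (hc : c ∈ ((J.comap (algebraMap A B) : Ideal A) : FractionalIdeal A⁰ K)⁻¹) :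
    c ∈ (J : FractionalIdeal B⁰ K)⁻¹ := by
  refine (mem_inv_iff (coeIdeal_ne_zero.2 hJ)).2 fun _ hy => ?_
  obtain ⟨y, hyJ, rfl⟩ := (mem_coeIdeal B⁰).1 hy
  have mul_mem {t : A} (ht : t ∈ J.comap (algebraMap A B)) : c * algebraMap A K t ∈ B := by
    obtain ⟨u, hu⟩ := (mem_one_iff A⁰).1 ((mem_inv_iff
      (coeIdeal_ne_zero.2 (comap_algebraMap_ne_bot B hJ))).1 hc _ (mem_coeIdeal_of_mem A⁰ ht))
    exact hu ▸ B.algebraMap_mem u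
  obtain ⟨r, hr, s, hs, h⟩ := exists_one_sub_mul_eq_of_mem B hyJ
  have hcy : c * y ∈ B := by
    have : c * y = c * algebraMap A K s + c * algebraMap A K r * y := by
      rw [← h]
      ring
    exact this ▸ add_mem (mul_mem hs) (B.mul_mem (mul_mem hr) y.2)
  exact (mem_one_iff B⁰).2 ⟨⟨_, hcy⟩, rfl⟩

theorem isUnit_coeIdeal_of_subalgebra (B : Subalgebra A K) {J : Ideal B} (hJ : J ≠ ⊥) :
    IsUnit (J : FractionalIdeal B⁰ K) := by
  set I : Ideal A := J.comap (algebraMap A B)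
  rw [← mul_inv_cancel_iff_isUnit K]
  refine le_antisymm mul_one_div_le_one (FractionalIdeal.one_le.2 ?_)
  have h1 : (1 : K) ∈ (I : FractionalIdeal A⁰ K) * (I : FractionalIdeal A⁰ K)⁻¹ := by
    rw [coe_ideal_mul_inv I (comap_algebraMap_ne_bot B hJ)]
    exact one_mem_one A⁰
  refine FractionalIdeal.mul_induction_on h1 (fun i hi c hc => ?_)
    fun _ _ => Submodule.add_mem (_ : Submodule B K)
  obtain ⟨i, hiI, rfl⟩ := (mem_coeIdeal A⁰).1 hi
  have hiJ : algebraMap A K i ∈ (J : FractionalIdeal B⁰ K) :=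
    (mem_coeIdeal B⁰).2 ⟨algebraMap A B i, hiI, rfl⟩
  exact mul_mem_mul hiJ (mem_inv_of_mem_inv_comap B hJ hc)

theorem isDedekindDomain_subalgebra (B : Subalgebra A K) : IsDedekindDomain B := by
  refine (isDedekindDomain_iff_mul_inv_cancel (K := K)).2 fun I hI => ?_
  obtain ⟨a, J, ha, rfl⟩ := exists_eq_spanSingleton_mul I
  rw [mul_inv_cancel_iff_isUnit]
  have ha' : algebraMap B K a ≠ 0 := by simpa using ha
  have hJ : J ≠ ⊥ := by
    rintro rfl
    simp at hI
  exact (IsUnit.of_mul_eq_one _ (spanSingleton_mul_inv K (inv_ne_zero ha'))).mul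
    (isUnit_coeIdeal_of_subalgebra B hJ)

end Overring

section FiniteOrder

variable {R : Type*} [CommRing R]

theorem isUnit_one_sub_of_pow_eq_one [IsDomain R] {x : R} {n : ℕ} (hx : x ^ n = 1) (hx1 : x ≠ 1)
    (hn : IsUnit (n : R)) : IsUnit (1 - x) := by
  have geom_sum : ∑ i ∈ Finset.range n, x ^ i = 0 := by
    have := geom_sum_mul x n
    rw [hx, sub_self] at this
    exact (mul_eq_zero.1 this).resolve_right (sub_ne_zero.2 hx1)
  have sum_one_sub : ∑ i ∈ Finset.range n, (1 - x ^ i) = n := by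
    simp [Finset.sum_sub_distrib, geom_sum]
  refine isUnit_of_dvd_unit ?_ hn
  rw [← sum_one_sub]
  exact Finset.dvd_sum fun i _ => one_sub_dvd_one_sub_pow x i

theorem eq_one_of_sub_one_mul_self_of_pow_eq_one {S : Type*} [Ring S] {a : S} {n : ℕ}
    (ha : (a - 1) * (a - 1) = 0) (hn : IsUnit (n : S)) (h : a ^ n = 1) : a = 1 := by
  have mul_sub_one : a * (a - 1) = a - 1 := by rwa [sub_mul, one_mul, sub_eq_zero] at ha
  have pow_mul_sub_one (i : ℕ) : a ^ i * (a - 1) = a - 1 := by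
    induction i with
    | zero => rw [pow_zero, one_mul]
    | succ i ih => rw [pow_succ, mul_assoc, mul_sub_one, ih]
  have cast_mul_sub_one : (n : S) * (a - 1) = 0 := by
    simpa only [Finset.sum_mul, pow_mul_sub_one, Finset.sum_const, Finset.card_range,
      nsmul_eq_mul, h, sub_self] using geom_sum_mul a n
  exact sub_eq_zero.1 (hn.mul_right_eq_zero.1 cast_mul_sub_one)

theorem eq_or_eq_inv_of_add_inv_eq [IsDomain R] {u w : Rˣ}
    (h : (u : R) + ↑u⁻¹ = w + ↑w⁻¹) : u = w ∨ u = w⁻¹ := by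
  have hfactor : ((u : R) - w) * (u - ↑w⁻¹) = 0 := by
    linear_combination (u : R) * h - u.mul_inv + w.mul_inv
  exact (mul_eq_zero.1 hfactor).imp (fun h => Units.ext (sub_eq_zero.1 h))
    fun h => Units.ext (sub_eq_zero.1 h)

theorem exists_det_sub_smul_one_eq_zero [IsDomain R] {m : Type*} [Fintype m] [DecidableEq m]
    [Nonempty m] {ζ : R} {n : ℕ} (hn : 0 < n) (hζ : IsPrimitiveRoot ζ n) {A : Matrix m m R}
    (hA : A ^ n = 1) : ∃ k : ℕ, (A - ζ ^ k • (1 : Matrix m m R)).det = 0 := by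
  have : NeZero n := ⟨hn.ne'⟩
  let detAeval := (detMonoidHom (R := R) (n := m)).comp (Polynomial.aeval A : _ →ₐ[R] _).toMonoidHom
  have hprod : ∏ ξ ∈ Polynomial.nthRootsFinset n (1 : R), (A - ξ • (1 : Matrix m m R)).det = 0 := by
    have h := congrArg detAeval (Polynomial.X_pow_sub_one_eq_prod hn hζ)
    rw [map_prod] at h
    simpa [detAeval, hA, Algebra.algebraMap_eq_smul_one] using h.symm
  obtain ⟨ξ, hξ, hdet⟩ := Finset.prod_eq_zero_iff.1 hprod
  obtain ⟨k, _, rfl⟩ := hζ.eq_pow_of_pow_eq_one ((Polynomial.mem_nthRootsFinset hn _).1 hξ)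
  exact ⟨k, hdet⟩

theorem mul_self_eq_trace_smul_sub_det_smul_one (A : Matrix (Fin 2) (Fin 2) R) :
    A * A = A.trace • A - A.det • (1 : Matrix (Fin 2) (Fin 2) R) := by
  nontriviality R
  have h := aeval_self_charpoly A
  rw [charpoly_fin_two, map_add, map_sub, map_mul, map_pow, Polynomial.aeval_X,
    Polynomial.aeval_C, Polynomial.aeval_C, ← Algebra.smul_def, Algebra.algebraMap_eq_smul_one, sq]
    at h
  rw [eq_sub_iff_add_eq, ← sub_eq_zero, ← h]
  abel

theorem det_sub_smul_one_fin_two (A : Matrix (Fin 2) (Fin 2) R) (c : R) :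
    (A - c • (1 : Matrix (Fin 2) (Fin 2) R)).det = A.det - c * A.trace + c ^ 2 := by
  simp only [det_fin_two, trace_fin_two, Matrix.sub_apply, Matrix.smul_apply, one_apply_eq,
    smul_eq_mul, mul_one, ne_eq, zero_ne_one, not_false_eq_true, one_apply_ne, mul_zero, sub_zero,
    one_ne_zero]
  ring

theorem exists_trace_eq_add_inv [IsDomain R] {n : ℕ} (hn : 0 < n) {ζ : Rˣ}
    (hζ : IsPrimitiveRoot ζ n) {g : SL(2, R)} (hg : g ^ n = 1) :
    ∃ k : ℕ, trace (g : Matrix (Fin 2) (Fin 2) R) = ↑(ζ ^ k) + ↑(ζ ^ k)⁻¹ := by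
  have hgn : (g : Matrix (Fin 2) (Fin 2) R) ^ n = 1 := by
    rw [← Matrix.SpecialLinearGroup.coe_pow, hg, Matrix.SpecialLinearGroup.coe_one]
  obtain ⟨k, hk⟩ :=
    exists_det_sub_smul_one_eq_zero hn (IsPrimitiveRoot.coe_units_iff.2 hζ) hgn
  rw [det_sub_smul_one_fin_two, Matrix.SpecialLinearGroup.det_coe, ← Units.val_pow_eq_pow_val] at hk
  refine ⟨k, ?_⟩
  linear_combination -(↑(ζ ^ k)⁻¹ : R) * hk + (↑(ζ ^ k) - trace g.1) * (ζ ^ k).mul_inv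

theorem sq_eq_one_of_trace_eq {n : ℕ} (hn : IsUnit (n : R)) {g : SL(2, R)} {w : Rˣ}
    (htrace : trace (g : Matrix (Fin 2) (Fin 2) R) = w + ↑w⁻¹) (hw : w ^ 2 = 1) (hwn : w ^ n = 1)
    (hgn : g ^ n = 1) : g ^ 2 = 1 := by
  set A := (g : Matrix (Fin 2) (Fin 2) R) with hA
  have hww : (w : R) * w = 1 := by
    rw [← Units.val_mul, ← sq, hw, Units.val_one]
  have hAA : A * A = (2 * w : R) • A - 1 := by
    rw [mul_self_eq_trace_smul_sub_det_smul_one, htrace, hA, Matrix.SpecialLinearGroup.det_coe,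
      one_smul, inv_eq_of_mul_eq_one_left (a := w) (by rwa [← sq]), two_mul]
  have unipotent : ((w : R) • A - 1) * ((w : R) • A - 1) = 0 := by
    simp only [sub_mul, mul_sub, one_mul, mul_one, Matrix.smul_mul, Matrix.mul_smul, smul_smul,
      hww, one_smul, hAA]
    module
  have pow_eq_one : ((w : R) • A) ^ n = 1 := by
    rw [smul_pow, hA, ← Matrix.SpecialLinearGroup.coe_pow, hgn,
      Matrix.SpecialLinearGroup.coe_one, ← Units.val_pow_eq_pow_val, hwn, Units.val_one, one_smul]
  have isUnit_cast : IsUnit (n : Matrix (Fin 2) (Fin 2) R) := by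
    simpa using hn.map (algebraMap R (Matrix (Fin 2) (Fin 2) R))
  have hwA := eq_one_of_sub_one_mul_self_of_pow_eq_one unipotent isUnit_cast pow_eq_one
  refine Subtype.ext ?_
  calc (A ^ 2 : Matrix (Fin 2) (Fin 2) R) = ((w : R) • A) ^ 2 := by
        rw [smul_pow, sq (w : R), hww, one_smul]
    _ = 1 := by rw [hwA, one_pow]

end FiniteOrder

/-- A `2 × 2` matrix of trace `1` and determinant `0`; by Cayley–Hamilton these are exactly the
idempotents whose image and kernel both have rank one. -/
@[ext] structure RankOneIdempotent (R : Type*) [CommRing R] where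
  toMatrix : Matrix (Fin 2) (Fin 2) R
  trace_eq_one : toMatrix.trace = 1
  det_eq_zero : toMatrix.det = 0

namespace RankOneIdempotent

variable {R : Type*} [CommRing R]

theorem isIdempotentElem (e : RankOneIdempotent R) : IsIdempotentElem e.toMatrix := by
  rw [IsIdempotentElem, mul_self_eq_trace_smul_sub_det_smul_one, e.trace_eq_one, e.det_eq_zero,
    one_smul, zero_smul, sub_zero]

/-- The complementary idempotent `1 - e`. -/
def compl (e : RankOneIdempotent R) : RankOneIdempotent R where
  toMatrix := 1 - e.toMatrix
  trace_eq_one := by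
    rw [trace_sub, trace_one, e.trace_eq_one, Fintype.card_fin]
    norm_num
  det_eq_zero := by
    have h := det_sub_smul_one_fin_two e.toMatrix 1
    rw [e.trace_eq_one, e.det_eq_zero, one_smul] at h
    rw [← neg_sub, det_neg, h]
    norm_num

/-- `SL₂` acts on idempotents by conjugation. -/
instance : MulAction SL(2, R) (RankOneIdempotent R) where
  smul γ e :=
    { toMatrix := γ * e.toMatrix * (γ⁻¹ : SL(2, R))
      trace_eq_one := by
        rw [trace_mul_cycle, ← Matrix.SpecialLinearGroup.coe_mul, inv_mul_cancel,
          Matrix.SpecialLinearGroup.coe_one, one_mul, e.trace_eq_one]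
      det_eq_zero := by rw [det_mul, det_mul, e.det_eq_zero, mul_zero, zero_mul] }
  one_smul e := RankOneIdempotent.ext (by
    change (1 : SL(2, R)) * e.toMatrix * ((1 : SL(2, R))⁻¹ : SL(2, R)) = e.toMatrix
    simp)
  mul_smul γ δ e := RankOneIdempotent.ext (by
    change ((γ * δ : SL(2, R)) : Matrix (Fin 2) (Fin 2) R) * e.toMatrix * ((γ * δ)⁻¹ : SL(2, R)) =
      γ * (δ * e.toMatrix * (δ⁻¹ : SL(2, R))) * (γ⁻¹ : SL(2, R))
    rw [_root_.mul_inv_rev, Matrix.SpecialLinearGroup.coe_mul, Matrix.SpecialLinearGroup.coe_mul]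
    simp only [Matrix.mul_assoc])

theorem toMatrix_smul (γ : SL(2, R)) (e : RankOneIdempotent R) :
    (γ • e).toMatrix = γ * e.toMatrix * (γ⁻¹ : SL(2, R)) := rfl

theorem toMatrix_compl (e : RankOneIdempotent R) : e.compl.toMatrix = 1 - e.toMatrix := rfl

theorem smul_eq_of_mul_eq_mul {γ : SL(2, R)} {e e' : RankOneIdempotent R}
    (h : γ * e.toMatrix = e'.toMatrix * γ) : γ • e = e' := by
  apply RankOneIdempotent.ext
  rw [toMatrix_smul, h, Matrix.mul_assoc, ← Matrix.SpecialLinearGroup.coe_mul, mul_inv_cancel,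
    Matrix.SpecialLinearGroup.coe_one, mul_one]

theorem det_smul_add_smul (e : RankOneIdempotent R) (s t : R) :
    (s • e.toMatrix + t • e.compl.toMatrix).det = s * t := by
  have htrace := e.trace_eq_one
  have hdet := e.det_eq_zero
  rw [trace_fin_two] at htrace
  rw [det_fin_two] at hdet ⊢
  simp only [toMatrix_compl, Matrix.add_apply, Matrix.smul_apply, smul_eq_mul, Matrix.sub_apply,
    one_apply_eq, ne_eq, zero_ne_one, not_false_eq_true, one_apply_ne, zero_sub, mul_neg,
    one_ne_zero]
  linear_combination (s - t) ^ 2 * hdet + (s - t) * t * htrace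

theorem smul_add_smul_mul (e : RankOneIdempotent R) (s t s' t' : R) :
    (s • e.toMatrix + t • e.compl.toMatrix) * (s' • e.toMatrix + t' • e.compl.toMatrix) =
      (s * s') • e.toMatrix + (t * t') • e.compl.toMatrix := by
  have he := e.isIdempotentElem
  simp only [toMatrix_compl, add_mul, mul_add, Matrix.smul_mul, Matrix.mul_smul, he.eq,
    he.one_sub.eq, he.mul_one_sub_self, he.one_sub_mul_self, smul_zero, smul_smul, add_zero,
    zero_add, mul_comm s', mul_comm t']

/-- The maximal torus of `SL₂` attached to an idempotent `e`: the unit `u` goes to the matrix acting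
as `u` on the image of `e` and as `u⁻¹` on its kernel. -/
def torus (e : RankOneIdempotent R) : Rˣ →* SL(2, R) where
  toFun u := ⟨(u : R) • e.toMatrix + (↑u⁻¹ : R) • e.compl.toMatrix, by
    rw [det_smul_add_smul, u.mul_inv]⟩
  map_one' := Subtype.ext (by simp [toMatrix_compl])
  map_mul' u v := Subtype.ext (by
    simp only [mul_inv, Units.val_mul]
    exact (e.smul_add_smul_mul u ↑u⁻¹ v ↑v⁻¹).symm)

theorem coe_torus (e : RankOneIdempotent R) (u : Rˣ) :
    (e.torus u : Matrix (Fin 2) (Fin 2) R) =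
      (u : R) • e.toMatrix + (↑u⁻¹ : R) • e.compl.toMatrix := rfl

theorem torus_smul (γ : SL(2, R)) (e : RankOneIdempotent R) (u : Rˣ) :
    (γ • e).torus u = γ * e.torus u * γ⁻¹ := by
  have hγ : (γ : Matrix (Fin 2) (Fin 2) R) * (γ⁻¹ : SL(2, R)) = 1 := by
    rw [← Matrix.SpecialLinearGroup.coe_mul, mul_inv_cancel, Matrix.SpecialLinearGroup.coe_one]
  apply Subtype.ext
  simp only [Matrix.SpecialLinearGroup.coe_mul, coe_torus, toMatrix_compl, toMatrix_smul, mul_add,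
    add_mul, mul_sub, sub_mul, Matrix.mul_smul, Matrix.smul_mul, mul_one, hγ]

theorem torus_compl (e : RankOneIdempotent R) (u : Rˣ) : e.compl.torus u = e.torus u⁻¹ := by
  apply Subtype.ext
  rw [coe_torus, coe_torus, toMatrix_compl e.compl, toMatrix_compl, sub_sub_cancel, inv_inv,
    add_comm]

theorem trace_torus (e : RankOneIdempotent R) (u : Rˣ) :
    trace (e.torus u : Matrix (Fin 2) (Fin 2) R) = u + ↑u⁻¹ := by
  simp [coe_torus, trace_smul, e.trace_eq_one, e.compl.trace_eq_one]

theorem torus_injective (e : RankOneIdempotent R) : Function.Injective e.torus := by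
  intro u v h
  have torus_mul (w : Rˣ) :
      trace ((e.torus w : Matrix (Fin 2) (Fin 2) R) * e.toMatrix) = w := by
    rw [coe_torus, toMatrix_compl, add_mul, Matrix.smul_mul, Matrix.smul_mul,
      e.isIdempotentElem.eq, e.isIdempotentElem.one_sub_mul_self, smul_zero, add_zero,
      trace_smul, e.trace_eq_one, smul_eq_mul, mul_one]
  exact Units.ext (by rw [← torus_mul u, h, torus_mul v])

theorem card_zpowers_torus (e : RankOneIdempotent R) (u : Rˣ) :
    Nat.card (Subgroup.zpowers (e.torus u)) = orderOf u := by
  rw [Nat.card_zpowers, orderOf_injective _ e.torus_injective]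

theorem zpowers_torus_smul (γ : SL(2, R)) (e : RankOneIdempotent R) (u : Rˣ) :
    Subgroup.zpowers ((γ • e).torus u) = ConjAct.toConjAct γ • Subgroup.zpowers (e.torus u) := by
  rw [torus_smul]
  exact (MonoidHom.map_zpowers
    (MulDistribMulAction.toMonoidHom _ (ConjAct.toConjAct γ)) (e.torus u)).symm

theorem exists_torus_eq_of_trace_eq {g : SL(2, R)} {w : Rˣ}
    (htrace : trace (g : Matrix (Fin 2) (Fin 2) R) = w + ↑w⁻¹) (hw : IsUnit ((w : R) - ↑w⁻¹)) :
    ∃ e : RankOneIdempotent R, e.torus w = g := by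
  obtain ⟨c, hc⟩ := hw.exists_right_inv
  let e : RankOneIdempotent R :=
    { toMatrix := c • ((g : Matrix (Fin 2) (Fin 2) R) - (↑w⁻¹ : R) • 1)
      trace_eq_one := by
        rw [trace_smul, trace_sub, trace_smul, trace_one, htrace, Fintype.card_fin]
        simp only [smul_eq_mul, Nat.cast_ofNat]
        linear_combination hc
      det_eq_zero := by
        rw [det_smul, det_sub_smul_one_fin_two, Matrix.SpecialLinearGroup.det_coe, htrace]
        linear_combination -c ^ Fintype.card (Fin 2) * w.mul_inv }
  refine ⟨e, Subtype.ext ?_⟩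
  rw [coe_torus, toMatrix_compl]
  calc (w : R) • e.toMatrix + (↑w⁻¹ : R) • (1 - e.toMatrix)
      = (((w : R) - ↑w⁻¹) * c) • ((g : Matrix (Fin 2) (Fin 2) R) - (↑w⁻¹ : R) • 1)
          + (↑w⁻¹ : R) • 1 := by module
    _ = g := by rw [hc, one_smul, sub_add_cancel]

variable [IsDomain R]

theorem eq_of_torus_eq_torus {e e' : RankOneIdempotent R} {u : Rˣ} (hu : u ^ 2 ≠ 1)
    (h : e.torus u = e'.torus u) : e = e' := by
  have hu' : (u : R) - ↑u⁻¹ ≠ 0 := fun h0 =>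
    hu (by rw [sq, ← eq_inv_iff_mul_eq_one, Units.ext_iff, sub_eq_zero.1 h0])
  have hmatrix : ((u : R) - ↑u⁻¹) • (e.toMatrix - e'.toMatrix) = 0 := by
    have h' := sub_eq_zero.2 (congrArg (fun g : SL(2, R) => (g : Matrix (Fin 2) (Fin 2) R)) h)
    simp only [coe_torus, toMatrix_compl] at h'
    rw [← h']
    module
  exact RankOneIdempotent.ext (sub_eq_zero.1 ((smul_eq_zero.1 hmatrix).resolve_left hu'))

theorem zpowers_torus_eq_iff {e e' : RankOneIdempotent R} {u : Rˣ} (hu : u ^ 2 ≠ 1) :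
    Subgroup.zpowers (e.torus u) = Subgroup.zpowers (e'.torus u) ↔ e = e' ∨ e = e'.compl := by
  constructor
  · intro h
    obtain ⟨k, hk⟩ := Subgroup.mem_zpowers_iff.1 (h ▸ Subgroup.mem_zpowers (e.torus u))
    rw [← map_zpow] at hk
    have htrace : (↑(u ^ k) : R) + ↑(u ^ k)⁻¹ = u + ↑u⁻¹ := by
      rw [← trace_torus e', ← trace_torus e, hk]
    rcases eq_or_eq_inv_of_add_inv_eq htrace with huk | huk
    · exact Or.inl (eq_of_torus_eq_torus hu (by rw [← hk, huk]))
    · exact Or.inr (eq_of_torus_eq_torus hu (by rw [← hk, huk, torus_compl]))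
  · rintro (rfl | rfl)
    · rfl
    · rw [torus_compl, map_inv, Subgroup.zpowers_inv]

theorem exists_torus_pow_eq {n : ℕ} (hn : IsUnit (n : R)) {ζ : Rˣ} (hζ : IsPrimitiveRoot ζ n)
    {g : SL(2, R)} (hg : g ^ n = 1) (hg2 : g ^ 2 ≠ 1) :
    ∃ (e : RankOneIdempotent R) (k : ℕ), e.torus (ζ ^ k) = g := by
  have hn0 : 0 < n := Nat.pos_of_ne_zero fun h => hn.ne_zero (by rw [h, Nat.cast_zero])
  obtain ⟨k, htrace⟩ := exists_trace_eq_add_inv hn0 hζ hg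
  set w := ζ ^ k
  have hwn : w ^ n = 1 := by rw [← pow_mul, mul_comm, pow_mul, hζ.pow_eq_one, one_pow]
  have hw2 : w ^ 2 ≠ 1 := fun h => hg2 (sq_eq_one_of_trace_eq hn htrace h hwn hg)
  have isUnit_one_sub : IsUnit (1 - (↑(w ^ 2) : R)) := by
    refine isUnit_one_sub_of_pow_eq_one ?_ (fun h => hw2 (Units.ext h)) hn
    rw [← Units.val_pow_eq_pow_val, ← pow_mul, mul_comm, pow_mul, hwn, one_pow, Units.val_one]
  have isUnit_sub : IsUnit ((w : R) - ↑w⁻¹) := by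
    have : (w : R) - ↑w⁻¹ = -↑w⁻¹ * (1 - ↑(w ^ 2)) := by
      rw [Units.val_pow_eq_pow_val w]
      linear_combination -(w : R) * w.mul_inv
    exact this ▸ w⁻¹.isUnit.neg.mul isUnit_one_sub
  obtain ⟨e, he⟩ := exists_torus_eq_of_trace_eq htrace isUnit_sub
  exact ⟨e, k, he⟩

theorem exists_zpowers_torus_eq {n : ℕ} (hn2 : 2 < n) (hn : IsUnit (n : R)) {ζ : Rˣ}
    (hζ : IsPrimitiveRoot ζ n) {H : Subgroup SL(2, R)} (hH : IsCyclic H) (hcard : Nat.card H = n) :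
    ∃ e : RankOneIdempotent R, Subgroup.zpowers (e.torus ζ) = H := by
  obtain ⟨g, rfl⟩ := H.isCyclic_iff_exists_zpowers_eq_top.1 hH
  rw [Nat.card_zpowers] at hcard
  obtain ⟨e, k, rfl⟩ := exists_torus_pow_eq hn hζ (hcard ▸ pow_orderOf_eq_one g)
    (pow_ne_one_of_lt_orderOf two_ne_zero (hcard ▸ hn2))
  have hcard' : Nat.card (Subgroup.zpowers (e.torus ζ)) = n := by
    rw [card_zpowers_torus, hζ.eq_orderOf]
  have : Finite (Subgroup.zpowers (e.torus ζ)) :=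
    Nat.finite_of_card_ne_zero (by omega)
  refine ⟨e, (Subgroup.eq_of_le_of_card_ge ?_ ?_).symm⟩
  · rw [Subgroup.zpowers_le, map_pow]
    exact Subgroup.npow_mem_zpowers _ _
  · rw [hcard', Nat.card_zpowers, hcard]

end RankOneIdempotent

section Perp

variable {R : Type*} [CommRing R]

/-- The vector `v` rotated by a right angle, used to write `1 - e` as a column times a row when `e`
is given in that form. -/
def perp (v : Fin 2 → R) : Fin 2 → R := ![v 1, -v 0]

theorem vecMulVec_perp_perp (x a : Fin 2 → R) :
    vecMulVec (perp x) (perp a) = (x ⬝ᵥ a) • (1 : Matrix (Fin 2) (Fin 2) R) - vecMulVec a x := by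
  ext i j
  fin_cases i <;> fin_cases j <;> simp [perp, vecMulVec_apply, dotProduct] <;> ring

theorem dotProduct_perp (v : Fin 2 → R) : v ⬝ᵥ perp v = 0 := by
  rw [vec2_dotProduct, perp, cons_val_zero, cons_val_one, cons_val_fin_one]
  ring

theorem det_vecMulVec_add_vecMulVec_perp (a x a' x' : Fin 2 → R) :
    (vecMulVec a' x + vecMulVec (perp x') (perp a)).det = (x' ⬝ᵥ a') * (x ⬝ᵥ a) := by
  simp only [det_fin_two, perp, Matrix.add_apply, vecMulVec_apply, vec2_dotProduct, cons_val_zero,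
    cons_val_one, cons_val_fin_one]
  ring

end Perp

section EntryIdeal

variable {R K ι κ : Type*} [CommRing R] [Field K] [Algebra R K] [IsFractionRing R K]
  [Fintype ι] [Fintype κ]

variable (R) in
/-- The fractional ideal generated by the entries of a vector over the fraction field. -/
noncomputable def entryIdeal (x : ι → K) : FractionalIdeal R⁰ K := spanFinset R Finset.univ x

theorem entryIdeal_le_iff {x : ι → K} {I : FractionalIdeal R⁰ K} :
    entryIdeal R x ≤ I ↔ ∀ i, x i ∈ I := by
  rw [← coe_le_coe, entryIdeal, spanFinset_coe, Submodule.span_le, Finset.coe_univ,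
    Set.image_univ, Set.range_subset_iff]
  rfl

theorem mem_entryIdeal (x : ι → K) (i : ι) : x i ∈ entryIdeal R x := entryIdeal_le_iff.1 le_rfl i

theorem entryIdeal_fin_two (x : Fin 2 → K) :
    entryIdeal R x = spanSingleton R⁰ (x 0) + spanSingleton R⁰ (x 1) := by
  refine le_antisymm (entryIdeal_le_iff.2 (Fin.forall_fin_two.2
    ⟨spanSingleton_le_iff_mem.1 le_sup_left, spanSingleton_le_iff_mem.1 le_sup_right⟩)) ?_
  exact sup_le (spanSingleton_le_iff_mem.2 (mem_entryIdeal x 0))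
    (spanSingleton_le_iff_mem.2 (mem_entryIdeal x 1))

theorem entryIdeal_perp (x : Fin 2 → K) : entryIdeal R (perp x) = entryIdeal R x := by
  rw [entryIdeal_fin_two, entryIdeal_fin_two, add_comm]
  congr 1
  rw [← coeToSubmodule_inj, coe_spanSingleton, coe_spanSingleton, ← Submodule.span_neg {x 0},
    Set.neg_singleton]
  rfl

theorem entryIdeal_smul (c : K) (x : ι → K) :
    entryIdeal R (c • x) = spanSingleton R⁰ c * entryIdeal R x := by
  rw [← coeToSubmodule_inj, coe_mul, coe_spanSingleton, entryIdeal, entryIdeal, spanFinset_coe,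
    spanFinset_coe, Submodule.span_mul_span, Set.singleton_mul, Set.image_image]
  rfl

theorem entryIdeal_vecMul_le (x : ι → K) (M : Matrix ι κ R) :
    entryIdeal R (x ᵥ* M.map (algebraMap R K)) ≤ entryIdeal R x := by
  refine entryIdeal_le_iff.2 fun j => Submodule.sum_mem _ fun i _ => ?_
  have : M i j • x i = x i * M.map (algebraMap R K) i j := by
    rw [Algebra.smul_def, mul_comm, map_apply]
  exact this ▸ Submodule.smul_mem _ _ (mem_entryIdeal x i)

theorem entryIdeal_mul_entryIdeal_le_one_iff {a : ι → K} {x : κ → K} :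
    entryIdeal R a * entryIdeal R x ≤ 1 ↔
      ∃ P : Matrix ι κ R, P.map (algebraMap R K) = vecMulVec a x := by
  constructor
  · intro h
    have hmem (i : ι) (j : κ) := (mem_one_iff R⁰).1
      (h (mul_mem_mul (mem_entryIdeal (R := R) a i) (mem_entryIdeal (R := R) x j)))
    choose P hP using hmem
    exact ⟨of P, Matrix.ext hP⟩
  · rintro ⟨P, hP⟩
    rw [← coe_le_coe, coe_mul, entryIdeal, entryIdeal, spanFinset_coe, spanFinset_coe,
      Submodule.span_mul_span, Submodule.span_le]
    rintro _ ⟨_, ⟨i, -, rfl⟩, _, ⟨j, -, rfl⟩, rfl⟩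
    exact (mem_one_iff R⁰).2 ⟨P i j, congrFun₂ hP i j⟩

theorem entryIdeal_mul_entryIdeal_eq_one {a x : ι → K} (h : entryIdeal R a * entryIdeal R x ≤ 1)
    (hxa : x ⬝ᵥ a = 1) : entryIdeal R a * entryIdeal R x = 1 := by
  refine le_antisymm h (FractionalIdeal.one_le.2 ?_)
  rw [← hxa, dotProduct_comm]
  exact Submodule.sum_mem _ fun i _ => mul_mem_mul (mem_entryIdeal a i) (mem_entryIdeal x i)

theorem exists_dotProduct_eq_one {x : Fin 2 → K} {I : FractionalIdeal R⁰ K}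
    (h : entryIdeal R x * I = 1) : ∃ a : Fin 2 → K, entryIdeal R a ≤ I ∧ x ⬝ᵥ a = 1 := by
  have h1 : (1 : K) ∈ spanSingleton R⁰ (x 0) * I + spanSingleton R⁰ (x 1) * I := by
    rw [← add_mul, ← entryIdeal_fin_two, h]
    exact one_mem_one R⁰
  obtain ⟨_, h0, _, h1, hsum⟩ := (mem_add _ _ _).1 h1
  obtain ⟨a₀, ha₀, rfl⟩ := mem_singleton_mul.1 h0
  obtain ⟨a₁, ha₁, rfl⟩ := mem_singleton_mul.1 h1
  exact ⟨![a₀, a₁], entryIdeal_le_iff.2 (Fin.forall_fin_two.2 ⟨ha₀, ha₁⟩), by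
    simpa [dotProduct] using hsum⟩

end EntryIdeal

theorem exists_eq_vecMulVec_of_det_eq_zero_s15 {K : Type*} [Field K] {M : Matrix (Fin 2) (Fin 2) K}
    (hM : M.det = 0) : ∃ a x : Fin 2 → K, M = vecMulVec a x := by
  rw [det_fin_two, sub_eq_zero] at hM
  by_cases h00 : M 0 0 = 0
  · rw [h00, zero_mul, zero_eq_mul] at hM
    rcases hM with h01 | h10
    · refine ⟨![0, 1], M 1, ?_⟩
      ext i j
      fin_cases i <;> fin_cases j <;> simp [vecMulVec_apply, h00, h01]
    · refine ⟨fun i => M i 1, ![0, 1], ?_⟩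
      ext i j
      fin_cases i <;> fin_cases j <;> simp [vecMulVec_apply, h00, h10]
  · refine ⟨![1, M 1 0 / M 0 0], M 0, ?_⟩
    ext i j
    fin_cases i <;> fin_cases j <;> simp [vecMulVec_apply] <;> field_simp
    linear_combination hM

namespace RankOneIdempotent

variable {R K : Type*} [CommRing R] [Field K] [Algebra R K]

/-- Over the fraction field an idempotent `e` of rank one is a column `a` times a row `x`, and the
fractional ideal generated by the entries of `x` is then isomorphic to the image of `e`. -/
def IsFactorization (e : RankOneIdempotent R) (a x : Fin 2 → K) : Prop :=
  e.toMatrix.map (algebraMap R K) = vecMulVec a x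

theorem exists_isFactorization (K : Type*) [Field K] [Algebra R K] (e : RankOneIdempotent R) :
    ∃ a x : Fin 2 → K, e.IsFactorization a x := by
  refine exists_eq_vecMulVec_of_det_eq_zero_s15 ?_
  rw [← RingHom.mapMatrix_apply, ← RingHom.map_det, e.det_eq_zero, map_zero]

namespace IsFactorization

variable {e e' : RankOneIdempotent R} {a x a' x' : Fin 2 → K}

theorem dotProduct_eq_one (h : e.IsFactorization a x) : x ⬝ᵥ a = 1 := by
  rw [dotProduct_comm, ← trace_vecMulVec, ← h, ← AddMonoidHom.map_trace, e.trace_eq_one, map_one]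

protected theorem compl (h : e.IsFactorization a x) :
    e.compl.IsFactorization (perp x) (perp a) := by
  rw [IsFactorization, vecMulVec_perp_perp, h.dotProduct_eq_one, one_smul, ← h, toMatrix_compl,
    Matrix.map_sub _ (map_sub _), Matrix.map_one _ (map_zero _) (map_one _)]

protected theorem smul (h : e.IsFactorization a x) (γ : SL(2, R)) :
    (γ • e).IsFactorization ((γ : Matrix (Fin 2) (Fin 2) R).map (algebraMap R K) *ᵥ a)
      (x ᵥ* ((γ⁻¹ : SL(2, R)) : Matrix (Fin 2) (Fin 2) R).map (algebraMap R K)) := by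
  rw [IsFactorization, ← vecMulVec_mul, ← mul_vecMulVec, ← h, ← Matrix.map_mul, ← Matrix.map_mul,
    toMatrix_smul]

theorem rescale (h : e.IsFactorization a x) {c : K} (hc : c ≠ 0) :
    e.IsFactorization (c⁻¹ • a) (c • x) := by
  rw [IsFactorization, smul_vecMulVec, vecMulVec_smul, inv_smul_smul₀ hc, h]

theorem eq_smul (h : e.IsFactorization a x) (h' : e.IsFactorization a' x') :
    x' = (x' ⬝ᵥ a) • x := by
  rw [← vecMul_vecMulVec, ← h, h', vecMul_vecMulVec, h'.dotProduct_eq_one, one_smul]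

variable [IsFractionRing R K]

theorem entryIdeal_mul_entryIdeal (h : e.IsFactorization a x) :
    entryIdeal R a * entryIdeal R x = 1 :=
  entryIdeal_mul_entryIdeal_eq_one (entryIdeal_mul_entryIdeal_le_one_iff.2 ⟨_, h⟩)
    h.dotProduct_eq_one

/-- The invertible fractional ideal generated by the row of a factorization. -/
noncomputable def ideal (h : e.IsFactorization a x) : (FractionalIdeal R⁰ K)ˣ :=
  Units.mkOfMulEqOne (entryIdeal R x) (entryIdeal R a)
    (by rw [mul_comm, h.entryIdeal_mul_entryIdeal])

theorem coe_ideal (h : e.IsFactorization a x) : (h.ideal : FractionalIdeal R⁰ K) = entryIdeal R x :=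
  rfl

theorem ideal_compl (h : e.IsFactorization a x) : h.compl.ideal = h.ideal⁻¹ :=
  Units.ext (entryIdeal_perp a)

theorem ideal_smul (h : e.IsFactorization a x) (γ : SL(2, R)) : (h.smul γ).ideal = h.ideal := by
  refine Units.ext (le_antisymm (entryIdeal_vecMul_le _ _) ?_)
  have hx : x = (x ᵥ* ((γ⁻¹ : SL(2, R)) : Matrix (Fin 2) (Fin 2) R).map (algebraMap R K)) ᵥ*
      (γ : Matrix (Fin 2) (Fin 2) R).map (algebraMap R K) := by
    rw [vecMul_vecMul, ← Matrix.map_mul, ← Matrix.SpecialLinearGroup.coe_mul, inv_mul_cancel,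
      Matrix.SpecialLinearGroup.coe_one, Matrix.map_one _ (map_zero _) (map_one _), vecMul_one]
  rw [coe_ideal, coe_ideal]
  nth_rw 1 [hx]
  exact entryIdeal_vecMul_le _ _

theorem ideal_rescale [IsDomain R] (h : e.IsFactorization a x) (c : Kˣ) :
    (h.rescale c.ne_zero).ideal = h.ideal * toPrincipalIdeal R K c :=
  Units.ext (by
    rw [Units.val_mul, coe_toPrincipalIdeal, mul_comm]
    exact entryIdeal_smul _ _)

theorem exists_ideal_mul_eq [IsDomain R] (h : e.IsFactorization a x)
    (h' : e.IsFactorization a' x') :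
    ∃ c : Kˣ, h.ideal * toPrincipalIdeal R K c = h'.ideal := by
  have hx' := h.eq_smul h'
  have hc : x' ⬝ᵥ a ≠ 0 := fun hc => one_ne_zero (α := K) (by
    rw [← h'.dotProduct_eq_one, hx', hc, zero_smul, zero_dotProduct])
  refine ⟨Units.mk0 _ hc, Units.ext ?_⟩
  rw [← h.ideal_rescale, coe_ideal, coe_ideal]
  exact congrArg (entryIdeal R) hx'.symm

/-- The glueing matrix maps `a` to `a'` and `perp x` to `perp x'`. -/
theorem exists_smul_eq (h : e.IsFactorization a x) (h' : e'.IsFactorization a' x')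
    (hideal : h.ideal = h'.ideal) : ∃ γ : SL(2, R), γ • e = e' := by
  have hx : entryIdeal R x = entryIdeal R x' := congrArg Units.val hideal
  have hax' : entryIdeal R a' * entryIdeal R x ≤ 1 := by
    rw [hx, h'.entryIdeal_mul_entryIdeal]
  have hperp : entryIdeal R (perp x') * entryIdeal R (perp a) ≤ 1 := by
    rw [entryIdeal_perp, entryIdeal_perp, ← hx, mul_comm, h.entryIdeal_mul_entryIdeal]
  obtain ⟨P, hP⟩ := entryIdeal_mul_entryIdeal_le_one_iff.1 hax'
  obtain ⟨Q, hQ⟩ := entryIdeal_mul_entryIdeal_le_one_iff.1 hperp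
  have map_add : (P + Q).map (algebraMap R K) = vecMulVec a' x + vecMulVec (perp x') (perp a) := by
    rw [Matrix.map_add _ (map_add _), hP, hQ]
  have hdet : (P + Q).det = 1 := IsFractionRing.injective R K (by
    rw [RingHom.map_det, RingHom.mapMatrix_apply, map_add, det_vecMulVec_add_vecMulVec_perp,
      h.dotProduct_eq_one, h'.dotProduct_eq_one, mul_one, map_one])
  have hcomm : (P + Q) * e.toMatrix = e'.toMatrix * (P + Q) := by
    apply map_injective (IsFractionRing.injective R K)
    beta_reduce
    rw [Matrix.map_mul, Matrix.map_mul, map_add, h, h', add_mul, mul_add]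
    simp only [vecMulVec_mul_vecMulVec, h.dotProduct_eq_one, h'.dotProduct_eq_one,
      dotProduct_perp, dotProduct_comm (perp a), zero_smul, vecMulVec_zero, one_smul]
  exact ⟨⟨P + Q, hdet⟩, smul_eq_of_mul_eq_mul hcomm⟩

end IsFactorization

theorem exists_isFactorization_of_entryIdeal_mul_le_one [IsFractionRing R K] {a x : Fin 2 → K}
    (hle : entryIdeal R a * entryIdeal R x ≤ 1) (hxa : x ⬝ᵥ a = 1) :
    ∃ e : RankOneIdempotent R, e.IsFactorization a x := by
  obtain ⟨P, hP⟩ := entryIdeal_mul_entryIdeal_le_one_iff.1 hle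
  refine ⟨⟨P, IsFractionRing.injective R K ?_, IsFractionRing.injective R K ?_⟩, hP⟩
  · rw [AddMonoidHom.map_trace, hP, trace_vecMulVec, dotProduct_comm, hxa, map_one]
  · rw [RingHom.map_det, RingHom.mapMatrix_apply, hP, det_vecMulVec, map_zero]

variable [IsDomain R]

/-- The class of the image of an idempotent, viewed as an invertible module. It is read off an
arbitrary factorization over the fraction field. -/
noncomputable def idealClass (e : RankOneIdempotent R) : ClassGroup R :=
  ClassGroup.mk (FractionRing R)
    (e.exists_isFactorization (FractionRing R)).choose_spec.choose_spec.ideal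

theorem IsFactorization.idealClass_eq {e : RankOneIdempotent R} {a x : Fin 2 → FractionRing R}
    (h : e.IsFactorization a x) : e.idealClass = ClassGroup.mk (FractionRing R) h.ideal :=
  ClassGroup.mk_eq_mk.2 (IsFactorization.exists_ideal_mul_eq _ h)

theorem idealClass_compl (e : RankOneIdempotent R) : e.compl.idealClass = e.idealClass⁻¹ := by
  obtain ⟨a, x, h⟩ := e.exists_isFactorization (FractionRing R)
  rw [h.compl.idealClass_eq, h.ideal_compl, map_inv, h.idealClass_eq]

theorem idealClass_eq_iff {e e' : RankOneIdempotent R} :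
    e.idealClass = e'.idealClass ↔ ∃ γ : SL(2, R), γ • e = e' := by
  obtain ⟨a, x, h⟩ := e.exists_isFactorization (FractionRing R)
  constructor
  · intro hclass
    obtain ⟨a', x', h'⟩ := e'.exists_isFactorization (FractionRing R)
    rw [h.idealClass_eq, h'.idealClass_eq] at hclass
    obtain ⟨c, hc⟩ := ClassGroup.mk_eq_mk.1 hclass
    exact (h.rescale c.ne_zero).exists_smul_eq h' (h.ideal_rescale c ▸ hc)
  · rintro ⟨γ, rfl⟩
    rw [h.idealClass_eq, (h.smul γ).idealClass_eq, h.ideal_smul]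

end RankOneIdempotent

theorem exists_mk_eq_and_coe_eq_entryIdeal {R : Type*} [CommRing R] [IsDedekindDomain R]
    (c : ClassGroup R) :
    ∃ (I : (FractionalIdeal R⁰ (FractionRing R))ˣ) (x : Fin 2 → FractionRing R),
      ClassGroup.mk (FractionRing R) I = c ∧ I = entryIdeal R x := by
  obtain ⟨I, rfl⟩ := ClassGroup.mk0_surjective c
  obtain ⟨s, hs, hs0⟩ := Submodule.exists_mem_ne_zero_of_ne_bot (nonZeroDivisors.coe_ne_zero I)
  obtain ⟨t, ht⟩ := IsDedekindDomain.exists_eq_span_pair hs hs0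
  refine ⟨_, ![algebraMap R _ s, algebraMap R _ t], ClassGroup.mk_mk0 (FractionRing R) I, ?_⟩
  rw [entryIdeal_fin_two, coe_mk0, ht, Ideal.span_insert, coeIdeal_sup, coeIdeal_span_singleton,
    coeIdeal_span_singleton]
  rfl

theorem RankOneIdempotent.idealClass_surjective (R : Type*) [CommRing R] [IsDedekindDomain R] :
    Function.Surjective (idealClass (R := R)) := by
  intro c
  obtain ⟨I, x, rfl, hI⟩ := exists_mk_eq_and_coe_eq_entryIdeal c
  obtain ⟨a, ha, hxa⟩ := exists_dotProduct_eq_one (R := R) (x := x) (hI ▸ I.mul_inv)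
  have hle : entryIdeal R a * entryIdeal R x ≤ 1 := by
    rw [← I.inv_mul, hI]
    exact mul_le_mul_left ha _
  obtain ⟨e, h⟩ := exists_isFactorization_of_entryIdeal_mul_le_one hle hxa
  exact ⟨e, h.idealClass_eq.trans (congrArg _ (Units.ext hI.symm))⟩

theorem card_eq_of_surjective_of_eq_iff_eq {α β γ : Type*} {f : α → β} {g : α → γ}
    (hf : Function.Surjective f) (hg : Function.Surjective g)
    (h : ∀ x y, f x = f y ↔ g x = g y) : Nat.card β = Nat.card γ :=
  Nat.card_congr ((Setoid.quotientKerEquivOfSurjective f hf).symm.trans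
    ((Quotient.congr (Equiv.refl α) h).trans (Setoid.quotientKerEquivOfSurjective g hg)))

theorem RankOneIdempotent.zpowers_torus_mem_orbit_iff {R : Type*} [CommRing R] [IsDomain R]
    {e e' : RankOneIdempotent R} {u : Rˣ} (hu : u ^ 2 ≠ 1) :
    Subgroup.zpowers (e.torus u) ∈
        MulAction.orbit (ConjAct SL(2, R)) (Subgroup.zpowers (e'.torus u)) ↔
      e'.idealClass = e.idealClass ∨ e'.idealClass = e.idealClass⁻¹ := by
  rw [← idealClass_compl, idealClass_eq_iff, idealClass_eq_iff, ← exists_or,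
    MulAction.mem_orbit_iff]
  refine (ConjAct.toConjAct.toEquiv.exists_congr fun γ => ?_).symm
  rw [← zpowers_torus_eq_iff hu, zpowers_torus_smul]
  rfl

theorem card_conjClasses_subgroups_order_ell_general {R : Type*} [CommRing R] [IsDedekindDomain R]
    {n : ℕ} (hn2 : 2 < n) (hn : IsUnit (n : R)) {ζ : R} (hζ : IsPrimitiveRoot ζ n) :
    Nat.card {c : Quotient (MulAction.orbitRel (ConjAct SL(2, R)) (Subgroup SL(2, R))) //
      ∃ H, c = Quotient.mk _ H ∧ IsCyclic H ∧ Nat.card H = n} =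
    Nat.card (Quotient (invSetoid (ClassGroup R))) := by
  obtain ⟨ζ, rfl⟩ := hζ.isUnit (by omega)
  replace hζ := IsPrimitiveRoot.coe_units_iff.1 hζ
  have hζ2 : ζ ^ 2 ≠ 1 := hζ.pow_ne_one_of_pos_of_lt two_ne_zero hn2
  let subgroupClass (e : RankOneIdempotent R) :
      {c : Quotient (MulAction.orbitRel (ConjAct SL(2, R)) (Subgroup SL(2, R))) //
        ∃ H, c = Quotient.mk _ H ∧ IsCyclic H ∧ Nat.card H = n} :=
    ⟨Quotient.mk _ (Subgroup.zpowers (e.torus ζ)), _, rfl, inferInstance,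
      (e.card_zpowers_torus ζ).trans hζ.eq_orderOf.symm⟩
  refine card_eq_of_surjective_of_eq_iff_eq (f := subgroupClass)
    (g := Quotient.mk _ ∘ RankOneIdempotent.idealClass) ?_
    (Quotient.mk_surjective.comp (RankOneIdempotent.idealClass_surjective R)) fun e e' => ?_
  · rintro ⟨_, H, rfl, hH, hcard⟩
    obtain ⟨e, rfl⟩ := RankOneIdempotent.exists_zpowers_torus_eq hn2 hn hζ hH hcard
    exact ⟨e, rfl⟩
  · rw [Subtype.ext_iff, Quotient.eq, Function.comp_apply, Function.comp_apply, Quotient.eq]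
    exact RankOneIdempotent.zpowers_torus_mem_orbit_iff hζ2

/-- Let `ℓ` be an odd prime, `K` a number field containing a primitive
`ℓ`-th root of unity, and `S` a finite set of finite places of `K` such that `ℓ` is invertible
in `O = O_{K,S}`.  Then the number of conjugacy classes of subgroups of order `ℓ` in `SL₂(O)`
equals the number of orbits of the ideal class group `Cl(O)` under the inversion involution
`c ↦ c⁻¹`. -/
theorem card_conjClasses_subgroups_order_ell
    (ℓ : ℕ) (hℓ : ℓ.Prime) (hℓodd : Odd ℓ)
    (K : Type*) [Field K] [NumberField K]
    (ζ : K) (hζ : IsPrimitiveRoot ζ ℓ)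
    (S : Set (HeightOneSpectrum (𝓞 K))) (hS : S.Finite)
    (hℓinv : IsUnit (ℓ : S.integer K)) :
    Nat.card {c : Quotient (MulAction.orbitRel
        (ConjAct (Matrix.SpecialLinearGroup (Fin 2) (S.integer K)))
        (Subgroup (Matrix.SpecialLinearGroup (Fin 2) (S.integer K)))) //
      ∃ H, c = Quotient.mk _ H ∧ Nat.card H = ℓ} =
    Nat.card (Quotient (invSetoid (ClassGroup (S.integer K)))) := by
  have : Fact ℓ.Prime := ⟨hℓ⟩
  have : IsDedekindDomain (S.integer K) := isDedekindDomain_subalgebra _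
  have hζ' : IsPrimitiveRoot (algebraMap (𝓞 K) (S.integer K) hζ.toInteger) ℓ :=
    hζ.toInteger_isPrimitiveRoot.map_of_injective (FaithfulSMul.algebraMap_injective _ _)
  have isCyclic_and_iff (H : Subgroup SL(2, S.integer K)) :
      IsCyclic H ∧ Nat.card H = ℓ ↔ Nat.card H = ℓ :=
    and_iff_right_of_imp fun h => isCyclic_of_prime_card h
  simpa only [isCyclic_and_iff] using
    card_conjClasses_subgroups_order_ell_general (hℓ.odd_iff.1 hℓodd) hℓinv hζ'
end
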